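/- Let X be a tree and p ∈ O(X) ∪ E(X) (an ordinary point or an end point of X). Then (X,p) has unique hyperspace C(p,X) in the class 𝒯 of trees; that is, for every tree Y and q ∈ Y such that C(p,X) is homeomorphic to C(q,Y), there is a homeomorphism 𝔥 : X → Y with 𝔥(p) = q. -/

import Mathlib

open Set Topology TopologicalSpace

universe u

/-- `IndDimLE m α t` means that the small inductive dimension of `α` is at most `m - 1`.
In particular `IndDimLE 0 α t` means `α` is empty (dimension `-1`). -/
def IndDimLE : ℕ → (α : Type u) → TopologicalSpace α → Prop
  | 0, α, _ => IsEmpty α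
  | n + 1, α, t =>
      ∀ (x : α) (U : Set α), @IsOpen α t U → x ∈ U →
        ∃ V : Set α, @IsOpen α t V ∧ x ∈ V ∧ V ⊆ U ∧
          IndDimLE n (↥(@frontier α t V))
            (TopologicalSpace.induced (Subtype.val : ↥(@frontier α t V) → α) t)

/-- The small inductive dimension of a topological space, as an integer
(with junk value if the dimension is infinite). -/
noncomputable def indDim (α : Type u) [t : TopologicalSpace α] : ℤ :=
  sInf {d : ℤ | ∃ m : ℕ, d = (m : ℤ) - 1 ∧ IndDimLE m α t}

section Defs

variable {X : Type u} [TopologicalSpace X]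

/-- `A` is an arc, i.e. homeomorphic to `[0,1]`. -/
def IsArcSet (A : Set X) : Prop :=
  Nonempty (↥A ≃ₜ ↥(Icc (0 : ℝ) 1))

/-- `A` is an arc with end points `a` and `b`. -/
def IsArcFromTo (A : Set X) (a b : X) : Prop :=
  ∃ h : ↥(Icc (0 : ℝ) 1) ≃ₜ ↥A,
    ((h ⟨0, by norm_num⟩ : ↥A) : X) = a ∧ ((h ⟨1, by norm_num⟩ : ↥A) : X) = b

/-- `a` is an end point of the arc `A`. -/
def IsArcEndpoint (A : Set X) (a : X) : Prop := ∃ b, IsArcFromTo A a b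

/-- The points of the arc `A` which are not end points of `A`. -/
def arcInterior (A : Set X) : Set X := {x ∈ A | ¬ IsArcEndpoint A x}

/-- `N` is a simple `n`-od with vertex `v`: the union of `n` arcs emanating from `v`
and otherwise disjoint from each other. -/
def IsSimpleNod (n : ℕ) (N : Set X) (v : X) : Prop :=
  0 < n ∧ ∃ A : Fin n → Set X, (∀ i, IsArcSet (A i)) ∧ (⋃ i, A i) = N ∧
    (∀ i, IsArcEndpoint (A i) v) ∧ ∀ i j, i ≠ j → A i ∩ A j = {v}

/-- `x` has order `n` in the subspace `S`: `x` has a closed neighborhood in `S`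
which is a simple `n`-od having `x` as the vertex. -/
def HasOrdIn (S : Set X) (x : X) (n : ℕ) : Prop :=
  ∃ N : Set X, N ⊆ S ∧ IsClosed N ∧ (∃ U : Set X, IsOpen U ∧ x ∈ U ∧ U ∩ S ⊆ N) ∧
    IsSimpleNod n N x

/-- The order of `x` in the subspace `S`. -/
noncomputable def ordIn (S : Set X) (x : X) : ℕ := sInf {n | HasOrdIn S x n}

/-- End points (order `1`) of the subspace `S`. -/
def endPtsIn (S : Set X) : Set X := {x ∈ S | HasOrdIn S x 1}

/-- Ordinary points (order `2`) of the subspace `S`. -/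
def ordinaryIn (S : Set X) : Set X := {x ∈ S | HasOrdIn S x 2}

/-- Ramification points (order `≥ 3`) of the subspace `S`. -/
def ramifIn (S : Set X) : Set X := {x ∈ S | ∃ n, 3 ≤ n ∧ HasOrdIn S x n}

/-- Vertices (points of order `≠ 2`) of the subspace `S`. -/
def verticesIn (S : Set X) : Set X := {x ∈ S | ¬ HasOrdIn S x 2}

/-- `e` is an edge of the subspace `S`: an arc joining two vertices of `S` and
containing no more than two vertices of `S`. -/
def IsEdgeIn (S : Set X) (e : Set X) : Prop :=
  e ⊆ S ∧ ∃ a b, a ∈ verticesIn S ∧ b ∈ verticesIn S ∧ IsArcFromTo e a b ∧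
    e ∩ verticesIn S ⊆ {a, b}

/-- `S` is a simple closed curve. -/
def IsSimpleClosedCurve (S : Set X) : Prop := Nonempty (↥S ≃ₜ Circle)

end Defs

/-- `X` is an arc (as a space). -/
def IsArcSpace (X : Type u) [TopologicalSpace X] : Prop :=
  Nonempty (X ≃ₜ ↥(Icc (0 : ℝ) 1))

/-- `X` is a finite graph: a continuum which is the union of finitely many arcs, any two
of which are either disjoint or intersect only in one or both of their end points. -/
def IsFiniteGraph (X : Type u) [MetricSpace X] : Prop :=
  CompactSpace X ∧ ConnectedSpace X ∧ Nonempty X ∧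
    ∃ 𝒜 : Finset (Set X), (∀ A ∈ 𝒜, IsArcSet A) ∧ ⋃₀ (𝒜 : Set (Set X)) = univ ∧
      ∀ A ∈ 𝒜, ∀ B ∈ 𝒜, A ≠ B → ∀ x ∈ A ∩ B, IsArcEndpoint A x ∧ IsArcEndpoint B x

/-- `X` is a tree: a finite graph without simple closed curves. -/
def IsTree (X : Type u) [MetricSpace X] : Prop :=
  IsFiniteGraph X ∧ ∀ S : Set X, ¬ IsSimpleClosedCurve S

/-- `X` is neither an arc nor a simple `n`-od. -/
def NotArcNotNod (X : Type u) [MetricSpace X] : Prop :=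
  ¬ IsArcSpace X ∧ ∀ (n : ℕ) (v : X), ¬ IsSimpleNod n (univ : Set X) v

/-- `T(X)`: the union of all edges of `X` disjoint from the set of end points of `X`. -/
def Tpart (X : Type u) [MetricSpace X] : Set X :=
  ⋃₀ {e : Set X | IsEdgeIn (univ : Set X) e ∧ e ∩ endPtsIn (univ : Set X) = ∅}

/-- `Sub_p(T(X))`: subtrees of `T(X)` containing `p` (subcontinua of `T(X)` all of whose
edges are edges of `X`). -/
def SubTreesP (X : Type u) [MetricSpace X] (p : X) : Set (Set X) :=
  {Y | Y ⊆ Tpart X ∧ p ∈ Y ∧ IsCompact Y ∧ IsConnected Y ∧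
    ∀ e : Set X, IsEdgeIn Y e → IsEdgeIn (univ : Set X) e}

/-- Subtrees of the tree `X`. -/
def Subtrees (X : Type u) [MetricSpace X] : Set (Set X) :=
  {Y | IsCompact Y ∧ IsConnected Y ∧
    ∀ e : Set X, IsEdgeIn Y e → IsEdgeIn (univ : Set X) e}

/-- The smallest subtree of `X` containing `a` and `b`. -/
def treeHull (X : Type u) [MetricSpace X] (a b : X) : Set X :=
  ⋂₀ {Y | Y ∈ Subtrees X ∧ a ∈ Y ∧ b ∈ Y}

/-- The hyperspace `C(p,X)` of subcontinua of `X` containing `p`,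
with the Hausdorff metric. -/
def CP (X : Type u) [MetricSpace X] (p : X) : Type u :=
  {A : NonemptyCompacts X // IsConnected (A : Set X) ∧ p ∈ (A : Set X)}

noncomputable instance (X : Type u) [MetricSpace X] (p : X) : MetricSpace (CP X p) :=
  inferInstanceAs (MetricSpace
    {A : NonemptyCompacts X // IsConnected (A : Set X) ∧ p ∈ (A : Set X)})

/-- The underlying subset of `X` of an element of `C(p,X)`. -/
def CP.set {X : Type u} [MetricSpace X] {p : X} (A : CP X p) : Set X := (A.1 : Set X)

/-- `U_n(X)`: elements of `C(p,X)` having a neighborhood in `C(p,X)` homeomorphic to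
the `n`-cell `[0,1]^n`. -/
def Un (X : Type u) [MetricSpace X] (p : X) (n : ℕ) : Set (CP X p) :=
  {A | ∃ N : Set (CP X p), N ∈ 𝓝 A ∧ Nonempty (↥N ≃ₜ (Fin n → ↥(Icc (0 : ℝ) 1)))}

/-- `𝒰(X) = ⋃ₙ U_n(X)`. -/
def UnionUn (X : Type u) [MetricSpace X] (p : X) : Set (CP X p) := ⋃ n : ℕ, Un X p n

/-- The edges of `X` which are not edges of `Y` and intersect `Y`. -/
def incidentE (X : Type u) [MetricSpace X] (Y : Set X) : Set (Set X) :=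
  {e | IsEdgeIn (univ : Set X) e ∧ ¬ IsEdgeIn Y e ∧ (e ∩ Y).Nonempty}

/-- `U_Y`: elements of `C(p,X)` of the form `Y` together with exactly one interior point
of each edge of `X` incident on `Y`. -/
def UofY (X : Type u) [MetricSpace X] (p : X) (Y : Set X) : Set (CP X p) :=
  {B | ∃ f : ↥(incidentE X Y) → X,
    (∀ e : ↥(incidentE X Y), f e ∈ arcInterior (e : Set X)) ∧ B.set = Y ∪ range f}

/-- `(X,p)` has unique hyperspace `C(p,X)` in the class of trees. -/
def UniqueHyperspaceInTrees (X : Type u) [MetricSpace X] (p : X) : Prop :=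
  ∀ (Y : Type u) [MetricSpace Y], IsTree Y → ∀ q : Y,
    Nonempty (CP X p ≃ₜ CP Y q) → ∃ 𝔥 : X ≃ₜ Y, 𝔥 p = q

/-!
With `p` as a vertex, the edges of a tree `X`, ordered away from `p`, form a finite forest. Dropping
vertices of order two we may assume that this forest is branching. A subcontinuum containing `p` is
determined by how far it extends along each edge, so `C(p, X)` consists of the points of a cube
which have a positive coordinate only at edges all of whose predecessors have coordinate `1`.

This complex is stratified by the set of inner edges which are completely filled; these sets are
the lower sets of inner edges. The local dimension on the stratum of `I` is the number of edges
growing out of `I`, and it increases strictly with `I` because the forest is branching. So two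
points are in the same stratum if and only if they lie in a connected set of constant local
dimension, and a homeomorphism permutes the strata by invariance of dimension. The stratum of each
lower cover of `I` accumulates at a point of the stratum of `I`, so this permutation is an
isomorphism between the lattices of lower sets, and comes from an isomorphism between the ordered
sets of inner edges. As it preserves the number of edges growing out of each lower set, it extends
to an isomorphism of the forests, which induces a homeomorphism of the trees fixing the root.
-/

section InvarianceOfDimension

open MeasureTheory Metric Polynomial
open scoped NNReal

lemma integral_eval_eq_of_infinite {α : Type*} [MeasurableSpace α] {μ : Measure α} {P : α → ℝ[X]}
    {d : ℕ} (hdeg : ∀ x, (P x).natDegree ≤ d)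
    (hint : ∀ t, Integrable (fun x => (P x).eval t) μ) {S : Set ℝ} (hS : S.Infinite) {c : ℝ}
    (hc : ∀ t ∈ S, ∫ x, (P x).eval t ∂μ = c) (t : ℝ) : ∫ x, (P x).eval t ∂μ = c := by
  obtain ⟨T, hTS, hT⟩ := hS.exists_subset_card_eq (d + 1)
  have hinj : InjOn id (T : Set ℝ) := injOn_id _
  have hne : T.Nonempty := Finset.card_pos.1 (by lia)
  have hinterp : ∀ x, (P x).eval t =
      ∑ s ∈ T, (P x).eval s * (Lagrange.basis T id s).eval t := by
    intro x
    have hlt : (P x).degree < T.card :=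
      degree_le_natDegree.trans_lt (by exact_mod_cast (hdeg x).trans_lt (by lia))
    conv_lhs => rw [Lagrange.eq_interpolate hinj hlt, Lagrange.interpolate_apply]
    simp [eval_finsetSum]
  calc ∫ x, (P x).eval t ∂μ
      = ∑ s ∈ T, (∫ x, (P x).eval s ∂μ) * (Lagrange.basis T id s).eval t := by
        simp only [hinterp]
        rw [integral_finsetSum _ fun s _ => (hint s).mul_const _]
        simp only [integral_mul_const]
    _ = c * (∑ s ∈ T, Lagrange.basis T id s).eval t := by
        rw [eval_finsetSum, Finset.mul_sum]
        exact Finset.sum_congr rfl fun s hs => by rw [hc s (hTS hs)]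
    _ = c := by rw [Lagrange.sum_basis hinj hne, eval_one, mul_one]

lemma image_eq_of_eqOn_frontier {α : Type*} [TopologicalSpace α] [T2Space α] {U : Set α}
    (hU : IsPreconnected U) (hne : U.Nonempty) (hcpt : IsCompact (closure U)) {f : α → α}
    (hf : ContinuousOn f (closure U)) (hmaps : MapsTo f U U) (hopen : IsOpen (f '' U))
    (hid : EqOn f id (closure U \ U)) : f '' U = U := by
  refine hmaps.image_subset.antisymm (hU.subset_of_closure_inter_subset hopen ?_ ?_)
  · obtain ⟨x, hx⟩ := hne
    exact ⟨f x, hmaps hx, mem_image_of_mem f hx⟩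
  · rintro y ⟨hy, hyU⟩
    obtain ⟨x, hx, rfl⟩ := closure_minimal (image_mono subset_closure)
      (hcpt.image_of_continuousOn hf).isClosed hy
    by_cases hxU : x ∈ U
    · exact mem_image_of_mem f hxU
    · rw [hid ⟨hx, hxU⟩] at hyU
      exact absurd hyU hxU

lemma injOn_id_add_of_lipschitzOnWith {V : Type*} [NormedAddCommGroup V] {K : ℝ≥0} {g : V → V}
    {s : Set V} (hg : LipschitzOnWith K g s) (hK : K < 1) : InjOn (fun x => x + g x) s := by
  rw [injOn_iff_injective]
  exact (AntilipschitzWith.subtype_coe s |>.add_lipschitzWith hg.to_restrict (by simpa)).injective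

section Determinant

variable {E : Type*} [NormedAddCommGroup E] [NormedSpace ℝ E]

lemma mapsTo_ball_id_add {K : ℝ≥0} (hK : K < 1) {u : E → E}
    (hu : LipschitzOnWith K u (closedBall 0 1)) (h0 : ∀ x, ‖x‖ = 1 → u x = 0) :
    MapsTo (fun x => x + u x) (ball 0 1) (ball 0 1) := by
  intro x hx
  rcases subsingleton_or_nontrivial E with hE | hE
  · rwa [Subsingleton.elim ((fun x => x + u x) x) x]
  obtain ⟨v, hv, hxv⟩ : ∃ v : E, ‖v‖ = 1 ∧ x = ‖x‖ • v := by
    rcases eq_or_ne x 0 with rfl | hx0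
    · obtain ⟨v, hv⟩ := exists_norm_eq E zero_le_one
      exact ⟨v, hv, by simp⟩
    · exact ⟨‖x‖⁻¹ • x, norm_smul_inv_norm hx0, (smul_inv_smul₀ (norm_ne_zero_iff.2 hx0) x).symm⟩
  rw [mem_ball_zero_iff] at hx ⊢
  have hdist : ‖x - v‖ = 1 - ‖x‖ := by
    have hsub : x - v = -((1 - ‖x‖) • v) := by rw [sub_smul, one_smul, neg_sub, ← hxv]
    rw [hsub, norm_neg, norm_smul, hv, mul_one, Real.norm_of_nonneg (by linarith)]
  have hux : ‖u x‖ ≤ K * (1 - ‖x‖) := by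
    simpa [h0 v hv, hdist] using
      hu.norm_sub_le (mem_closedBall_zero_iff.2 hx.le) (mem_closedBall_zero_iff.2 hv.le)
  nlinarith [norm_add_le x (u x), show (K : ℝ) < 1 from hK]

variable [FiniteDimensional ℝ E]

lemma exists_polynomial_eval_eq_det_id_add_smul (A : E →L[ℝ] E) :
    ∃ P : ℝ[X], P.natDegree ≤ Module.finrank ℝ E ∧
      ∀ t : ℝ, P.eval t = (ContinuousLinearMap.id ℝ E + t • A).det := by
  classical
  let b := Module.finBasis ℝ E
  let M := LinearMap.toMatrix b b (A : E →ₗ[ℝ] E)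
  refine ⟨((X : ℝ[X]) • M.map C + (1 : Matrix _ _ ℝ).map C).det, ?_, fun t => ?_⟩
  · simpa using natDegree_det_X_add_C_le M 1
  · have hdet : (ContinuousLinearMap.id ℝ E + t • A).det =
        LinearMap.det (LinearMap.id + t • (A : E →ₗ[ℝ] E)) := rfl
    have hmat : LinearMap.toMatrix b b (LinearMap.id + t • (A : E →ₗ[ℝ] E)) = 1 + t • M := by
      rw [map_add, map_smul, LinearMap.toMatrix_id]
    rw [hdet, ← LinearMap.det_toMatrix b, hmat, ← coe_evalRingHom, RingHom.map_det]
    congr 1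
    ext i j
    simp [Matrix.one_apply, apply_ite, add_comm, mul_comm t]

lemma bijective_id_add_of_norm_lt_one {A : E →L[ℝ] E} (hA : ‖A‖ < 1) :
    Function.Bijective (ContinuousLinearMap.id ℝ E + A) := by
  have hinj : Function.Injective (ContinuousLinearMap.id ℝ E + A : E →L[ℝ] E) :=
    injOn_univ.1 (injOn_id_add_of_lipschitzOnWith A.lipschitz.lipschitzOnWith hA)
  exact ⟨hinj, LinearMap.surjective_of_injective
    (f := ((ContinuousLinearMap.id ℝ E + A : E →L[ℝ] E) : E →ₗ[ℝ] E)) hinj⟩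

lemma det_ne_zero_iff_bijective {A : E →L[ℝ] E} : A.det ≠ 0 ↔ Function.Bijective A := by
  rw [← isUnit_iff_ne_zero]
  exact (LinearMap.isUnit_iff_isUnit_det (A : E →ₗ[ℝ] E)).symm.trans (Module.End.isUnit_iff _)

lemma det_id_add_pos_of_norm_lt_one {A : E →L[ℝ] E} (hA : ‖A‖ < 1) :
    0 < (ContinuousLinearMap.id ℝ E + A).det := by
  have hne : ∀ t ∈ Icc (0 : ℝ) 1, (ContinuousLinearMap.id ℝ E + t • A).det ≠ 0 := by
    intro t ht
    have hlt : ‖t • A‖ < 1 := by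
      rw [norm_smul, Real.norm_of_nonneg ht.1]
      exact (mul_le_of_le_one_left (norm_nonneg A) ht.2).trans_lt hA
    exact det_ne_zero_iff_bijective.2 (bijective_id_add_of_norm_lt_one hlt)
  by_contra hle
  obtain ⟨t, ht, ht0⟩ := intermediate_value_Icc' zero_le_one
    (f := fun t : ℝ => (ContinuousLinearMap.id ℝ E + t • A).det)
    (ContinuousLinearMap.continuous_det.comp (by fun_prop)).continuousOn
    (show (0 : ℝ) ∈ Icc _ _ by simpa [ContinuousLinearMap.det] using hle)
  exact hne t ht ht0

variable {u : E → E} {K : ℝ≥0}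

lemma image_ball_id_add (hu : ContDiff ℝ 1 u) (hK : K < 1)
    (hbound : ∀ x ∈ closedBall (0 : E) 1, ‖fderiv ℝ u x‖₊ ≤ K) (h0 : ∀ x, ‖x‖ = 1 → u x = 0) :
    (fun x => x + u x) '' ball 0 1 = ball 0 1 := by
  have hstrict : ∀ x, HasStrictFDerivAt (fun x => x + u x)
      (ContinuousLinearMap.id ℝ E + fderiv ℝ u x) x := fun x =>
    (hasStrictFDerivAt_id x).add (hu.contDiffAt.hasStrictFDerivAt one_ne_zero)
  have hopen : IsOpen ((fun x => x + u x) '' ball 0 1) := by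
    rw [isOpen_iff_mem_nhds]
    rintro _ ⟨x, hx, rfl⟩
    have hrange : (ContinuousLinearMap.id ℝ E + fderiv ℝ u x).range = ⊤ :=
      LinearMap.range_eq_top.2 (bijective_id_add_of_norm_lt_one
        ((hbound x (ball_subset_closedBall hx)).trans_lt hK)).2
    rw [← (hstrict x).map_nhds_eq_of_surj hrange]
    exact Filter.image_mem_map (isOpen_ball.mem_nhds hx)
  have hcl : closure (ball (0 : E) 1) = closedBall 0 1 := closure_ball 0 one_ne_zero
  refine image_eq_of_eqOn_frontier (convex_ball 0 1).isPreconnected ⟨0, by simp⟩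
    (hcl ▸ isCompact_closedBall 0 1) (continuous_id.add hu.continuous).continuousOn
    (mapsTo_ball_id_add hK ?_ h0) hopen ?_
  · exact (convex_closedBall 0 1).lipschitzOnWith_of_nnnorm_fderiv_le
      (fun x _ => hu.differentiable one_ne_zero x) hbound
  · rintro x ⟨hx, hxball⟩
    rw [hcl, mem_closedBall_zero_iff] at hx
    simp [h0 x (hx.antisymm (by simpa using hxball))]

lemma setIntegral_det_id_add_fderiv_of_nnnorm_le [MeasurableSpace E] [BorelSpace E] (μ : Measure E)
    [μ.IsAddHaarMeasure] (hu : ContDiff ℝ 1 u) (hK : K < 1)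
    (hbound : ∀ x ∈ closedBall (0 : E) 1, ‖fderiv ℝ u x‖₊ ≤ K) (h0 : ∀ x, ‖x‖ = 1 → u x = 0) :
    ∫ x in ball (0 : E) 1, (ContinuousLinearMap.id ℝ E + fderiv ℝ u x).det ∂μ =
      μ.real (ball (0 : E) 1) := by
  have hdiff := hu.differentiable one_ne_zero
  have hLip : LipschitzOnWith K u (closedBall 0 1) :=
    (convex_closedBall 0 1).lipschitzOnWith_of_nnnorm_fderiv_le (fun x _ => hdiff x) hbound
  have hchange := integral_image_eq_integral_abs_det_fderiv_smul μ
    (measurableSet_ball (x := (0 : E)) (ε := 1))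
    (fun x _ => ((hasFDerivAt_id x).add (hdiff x).hasFDerivAt).hasFDerivWithinAt)
    ((injOn_id_add_of_lipschitzOnWith hLip hK).mono ball_subset_closedBall) (fun _ => (1 : ℝ))
  have hadd : (id + u : E → E) = fun x => x + u x := rfl
  rw [hadd, image_ball_id_add hu hK hbound h0] at hchange
  simp only [smul_eq_mul, mul_one, setIntegral_const] at hchange
  rw [hchange]
  refine setIntegral_congr_fun measurableSet_ball fun x hx => (abs_of_pos ?_).symm
  exact det_id_add_pos_of_norm_lt_one ((hbound x (ball_subset_closedBall hx)).trans_lt hK)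

-- The idea of Milnor and Rogers: with `t • u` in place of `u` the integral is polynomial in `t`,
-- and it is constant for small `t`.
lemma setIntegral_det_id_add_fderiv [MeasurableSpace E] [BorelSpace E] (μ : Measure E)
    [μ.IsAddHaarMeasure] (hu : ContDiff ℝ 1 u) (h0 : ∀ x, ‖x‖ = 1 → u x = 0) :
    ∫ x in ball (0 : E) 1, (ContinuousLinearMap.id ℝ E + fderiv ℝ u x).det ∂μ =
      μ.real (ball (0 : E) 1) := by
  have hderiv := hu.continuous_fderiv one_ne_zero
  obtain ⟨M, hM⟩ := (isCompact_closedBall (0 : E) 1).exists_bound_of_continuousOn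
    hderiv.continuousOn
  have hM0 : 0 ≤ M := (norm_nonneg _).trans (hM 0 (by simp))
  choose P hPdeg hPeval using fun x => exists_polynomial_eval_eq_det_id_add_smul (fderiv ℝ u x)
  have hint : ∀ t, IntegrableOn (fun x => (P x).eval t) (ball (0 : E) 1) μ := by
    intro t
    have hc : Continuous fun x => (P x).eval t := by
      simp only [hPeval]
      exact ContinuousLinearMap.continuous_det.comp (continuous_const.add (hderiv.const_smul t))
    exact (hc.continuousOn.integrableOn_compact (isCompact_closedBall 0 1)).mono_set
      ball_subset_closedBall
  have hsmall : ∀ t ∈ Ioo (0 : ℝ) (2 * (M + 1))⁻¹,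
      ∫ x in ball (0 : E) 1, (P x).eval t ∂μ = μ.real (ball (0 : E) 1) := by
    intro t ht
    have htM : t * M ≤ 1 / 2 := by
      have := (lt_inv_mul_iff₀ (by positivity : 0 < 2 * (M + 1)) (b := 1)).1 (by simpa using ht.2)
      nlinarith [ht.1]
    have hfderiv : ∀ x, fderiv ℝ (t • u) x = t • fderiv ℝ u x := fun x =>
      fderiv_const_smul (hu.differentiable one_ne_zero x) t
    simp only [hPeval, ← hfderiv]
    refine setIntegral_det_id_add_fderiv_of_nnnorm_le μ (hu.const_smul t) (K := 1 / 2) (by norm_num)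
      (fun x hx => ?_) fun x hx => by simp [h0 x hx]
    rw [hfderiv, ← NNReal.coe_le_coe, coe_nnnorm, norm_smul, Real.norm_of_nonneg ht.1.le]
    exact (mul_le_mul_of_nonneg_left (hM x hx) ht.1.le).trans (by simpa using htM)
  simpa only [hPeval, one_smul] using
    integral_eval_eq_of_infinite hPdeg hint (Ioo_infinite (by positivity)) hsmall 1

end Determinant

section Retraction

variable {E : Type*} [NormedAddCommGroup E] [InnerProductSpace ℝ E]

lemma not_surjective_fderiv_of_norm_eq_one {h : E → E} {x : E} (hd : DifferentiableAt ℝ h x)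
    (hn : ∀ y, ‖h y‖ = 1) : ¬ Function.Surjective (fderiv ℝ h x) := by
  intro hsurj
  have hconst : (fun y => ‖h y‖ ^ 2) = fun _ => (1 : ℝ) := by funext y; rw [hn, one_pow]
  have horth : ∀ v, inner ℝ (h x) (fderiv ℝ h x v) = 0 := by
    intro v
    have hderiv := hd.hasFDerivAt.norm_sq
    rw [hconst] at hderiv
    simpa using congrArg (fun L => L v) (hderiv.unique (hasFDerivAt_const (1 : ℝ) x))
  obtain ⟨v, hv⟩ := hsurj (h x)
  have hzero := horth v
  rw [hv, real_inner_self_eq_norm_sq, hn] at hzero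
  norm_num at hzero

variable [FiniteDimensional ℝ E]

lemma not_contDiff_retraction {h : E → E} (hd : ContDiff ℝ 1 h) (hn : ∀ x, ‖h x‖ = 1) :
    ¬ ∀ x, ‖x‖ = 1 → h x = x := by
  intro hs
  borelize E
  have hdiff := hd.differentiable one_ne_zero
  have hzero : ∀ x, (ContinuousLinearMap.id ℝ E + fderiv ℝ (fun x => h x - x) x).det = 0 := by
    intro x
    rw [fderiv_fun_sub (hdiff x) differentiableAt_fun_id, fderiv_fun_id, add_sub_cancel]
    by_contra hdet
    exact not_surjective_fderiv_of_norm_eq_one (hdiff x) hn (det_ne_zero_iff_bijective.1 hdet).2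
  have hvol := setIntegral_det_id_add_fderiv volume (hd.sub contDiff_id) fun x hx => by
    simp [hs x hx]
  have hpos : 0 < volume.real (ball (0 : E) 1) :=
    ENNReal.toReal_pos (measure_ball_pos _ 0 one_pos).ne' measure_ball_lt_top.ne
  simp only [id_eq, hzero, integral_zero] at hvol
  exact hpos.ne hvol

lemma exists_eq_zero_of_eqOn_compl_ball {Ψ : E → E} (hΨ : Continuous Ψ) {r : ℝ} (hr : 0 < r)
    (hid : ∀ x, r ≤ ‖x‖ → Ψ x = x) : ∃ x, Ψ x = 0 := by
  by_contra! hΨ0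
  obtain ⟨G, hG, hGΨ, hGid, -⟩ := hΨ.exists_contDiff_approx_and_eqOn 1
    (ε := fun x => ‖Ψ x‖) hΨ.norm (fun x => norm_pos_iff.2 (hΨ0 x))
    (S := {x : E | r + 1 ≤ ‖x‖}) (U := {x : E | r < ‖x‖})
    (isClosed_le continuous_const continuous_norm)
    ((isOpen_lt continuous_const continuous_norm).mem_nhdsSet.2 fun x (hx : r + 1 ≤ ‖x‖) =>
      show r < ‖x‖ by linarith)
    (contDiffOn_id.congr fun x hx => hid x (le_of_lt hx))
  have hG0 : ∀ x, G x ≠ 0 := by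
    intro x hx
    have := hGΨ x
    rw [hx, dist_zero_left] at this
    exact lt_irrefl _ this
  have hG' : ContDiff ℝ 1 fun x => G ((r + 1) • x) :=
    (show ContDiff ℝ 1 G by exact_mod_cast hG).comp (contDiff_const_smul (r + 1))
  refine not_contDiff_retraction (h := fun x => ‖G ((r + 1) • x)‖⁻¹ • G ((r + 1) • x))
    (((hG'.norm ℝ fun x => hG0 _).inv fun x => norm_ne_zero_iff.2 (hG0 _)).smul hG')
    (fun x => norm_smul_inv_norm (hG0 _)) fun x hx => ?_
  have hnorm : ‖(r + 1) • x‖ = r + 1 := by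
    rw [norm_smul, hx, mul_one, Real.norm_of_nonneg (by linarith)]
  have hGx : G ((r + 1) • x) = (r + 1) • x :=
    (hGid hnorm.ge).trans (hid _ (by linarith))
  simp only [hGx, hnorm]
  exact inv_smul_smul₀ (by linarith) x

lemma exists_eq_zero_of_norm_sub_lt {Φ : E → E} (hΦ : Continuous Φ) {r : ℝ} (hr : 0 < r)
    (hlt : ∀ x, ‖x‖ ≤ 2 * r → ‖Φ x - x‖ < r) : ∃ x, Φ x = 0 := by
  let χ : E → ℝ := fun x => max 0 (min 1 (2 - ‖x‖ / r))
  have hχ0 : ∀ x, 0 ≤ χ x := fun x => le_max_left _ _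
  have hχ1 : ∀ x, χ x ≤ 1 := fun x => max_le zero_le_one (min_le_left _ _)
  have hχ : Continuous χ := by fun_prop
  have hfar : ∀ x, 2 * r ≤ ‖x‖ → x + χ x • (Φ x - x) = x := by
    intro x hx
    have : χ x = 0 := max_eq_left ((min_le_right _ _).trans
      (sub_nonpos.2 ((le_div_iff₀ hr).2 hx)))
    rw [this, zero_smul, add_zero]
  obtain ⟨x, hx⟩ := exists_eq_zero_of_eqOn_compl_ball
    (Ψ := fun x => x + χ x • (Φ x - x)) (by fun_prop) (by linarith) hfar
  rcases le_total ‖x‖ r with hxr | hrx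
  · have : χ x = 1 := by
      have : ‖x‖ / r ≤ 1 := (div_le_one hr).2 hxr
      simp only [χ]
      rw [min_eq_left (by linarith), max_eq_right zero_le_one]
    exact ⟨x, by simpa [this] using hx⟩
  · exfalso
    rcases le_total ‖x‖ (2 * r) with hx2 | hx2
    · have hnorm : ‖x‖ = χ x * ‖Φ x - x‖ := by
        conv_lhs => rw [eq_neg_of_add_eq_zero_left hx, norm_neg, norm_smul,
          Real.norm_of_nonneg (hχ0 x)]
      linarith [hlt x hx2, mul_le_of_le_one_left (norm_nonneg (Φ x - x)) (hχ1 x)]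
    · have hx0 : x = 0 := (hfar x hx2).symm.trans hx
      rw [hx0, norm_zero] at hrx
      linarith

lemma exists_continuous_leftInvOn {α : Type*} [TopologicalSpace α] [NormalSpace α] [T2Space α]
    {V : Type*} [NormedAddCommGroup V] [NormedSpace ℝ V] [FiniteDimensional ℝ V] {s : Set V}
    (hs : IsCompact s) {f : V → α} (hf : ContinuousOn f s) (hinj : InjOn f s) :
    ∃ g : C(α, V), LeftInvOn g f s := by
  have : CompactSpace s := isCompact_iff_compactSpace.1 hs
  have hemb : IsClosedEmbedding (s.domRestrict f) :=
    hf.domRestrict.isClosedEmbedding (injOn_iff_injective.1 hinj)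
  have : TietzeExtension V := TietzeExtension.of_homeo (toEuclidean (E := V)).toHomeomorph
  obtain ⟨g, hg⟩ := ContinuousMap.exists_extension hemb
    (⟨Subtype.val, continuous_subtype_val⟩ : C(s, V))
  exact ⟨g, fun x hx => DFunLike.congr_fun hg ⟨x, hx⟩⟩

-- A smooth approximation of a continuous left inverse of `f` has a range with dense complement.
theorem not_injOn_of_finrank_lt {V : Type*} [NormedAddCommGroup V] [NormedSpace ℝ V]
    [FiniteDimensional ℝ V] (hdim : Module.finrank ℝ V < Module.finrank ℝ E)
    {f : E → V} (hf : Continuous f) {s : Set E} {c : E} (hs : s ∈ 𝓝 c) : ¬ InjOn f s := by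
  intro hinj
  obtain ⟨r, hr, hrs⟩ := nhds_basis_closedBall.mem_iff.1 hs
  obtain ⟨g, hg⟩ := exists_continuous_leftInvOn (isCompact_closedBall c r) hf.continuousOn
    (hinj.mono hrs)
  obtain ⟨G, hG, hGg, -⟩ := g.continuous.exists_contDiff_approx 1 (ε := fun _ => r / 4)
    continuous_const (fun _ => by positivity)
  have hG' : ContDiff ℝ 1 G := by exact_mod_cast hG
  obtain ⟨y, hy, hcy⟩ := (hG'.dense_compl_range_of_finrank_lt_finrank hdim).exists_dist_lt c
    (show 0 < r / 4 by positivity)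
  obtain ⟨x, hx⟩ := exists_eq_zero_of_norm_sub_lt (Φ := fun x => G (f (c + x)) - y)
    ((hG'.continuous.comp (hf.comp (continuous_const.add continuous_id))).sub continuous_const)
    (half_pos hr) fun x hx => by
      have hmem : c + x ∈ closedBall c r := by
        simpa using (by linarith : ‖x‖ ≤ r)
      have hGx : ‖G (f (c + x)) - (c + x)‖ < r / 4 := by
        simpa [hg hmem, dist_eq_norm] using hGg (f (c + x))
      calc ‖G (f (c + x)) - y - x‖ = ‖(G (f (c + x)) - (c + x)) + (c - y)‖ := by congr 1; abel
        _ ≤ ‖G (f (c + x)) - (c + x)‖ + ‖c - y‖ := norm_add_le _ _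
        _ < r / 2 := by rw [← dist_eq_norm c y]; linarith
  exact hy ⟨f (c + x), sub_eq_zero.1 hx⟩

end Retraction

end InvarianceOfDimension

section Forest

variable (F : Type*) [PartialOrder F]

/-- A partial order is a forest if the elements below any given one form a chain. -/
def IsForest : Prop := ∀ a b c : F, a ≤ c → b ≤ c → a ≤ b ∨ b ≤ a

/-- A partial order is branching if above every non-maximal element there are incomparable ones;
for a finite forest this says that no element has exactly one upper cover. -/
def IsBranching : Prop := ∀ e c : F, e < c → ∃ f, e < f ∧ ¬ c ≤ f

/-- The edges of a rooted tree (ordered away from the root) which do not end in an end point. -/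
abbrev InnerEdge := {e : F // ¬ IsMax e}

variable {F}

/-- The edges strictly below `c`, which are necessarily inner. -/
def strictBelow (c : F) : LowerSet (InnerEdge F) where
  carrier := {f | f.1 < c}
  lower' _ _ hba ha := lt_of_le_of_lt (show _ ≤ _ from hba) ha

/-- The edges which grow out of the subtree with set of edges `I`: those not in `I` all of whose
predecessors are in `I`. -/
def outEdges (I : LowerSet (InnerEdge F)) : Set F :=
  {c | strictBelow c ≤ I} \ Subtype.val '' (I : Set (InnerEdge F))

lemma mem_strictBelow {c : F} {f : InnerEdge F} : f ∈ strictBelow c ↔ f.1 < c := Iff.rfl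

lemma image_subset_setOf_strictBelow_le (I : LowerSet (InnerEdge F)) :
    Subtype.val '' (I : Set (InnerEdge F)) ⊆ {c | strictBelow c ≤ I} := by
  rintro _ ⟨c, hc, rfl⟩ f hf
  exact I.lower (show f ≤ c from (mem_strictBelow.1 hf).le) hc

lemma IsForest.le_of_covBy (hF : IsForest F) {f e c : F} (hec : e ⋖ c) (hf : f < c) : f ≤ e := by
  rcases hF f e c hf.le hec.le with h | h
  · exact h
  · exact (h.eq_or_lt.resolve_right fun hlt => hec.2 hlt hf).ge

lemma IsForest.eq_of_covBy (hF : IsForest F) {e e' c : F} (he : e ⋖ c) (he' : e' ⋖ c) : e = e' :=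
  le_antisymm (hF.le_of_covBy he' he.lt) (hF.le_of_covBy he he'.lt)

variable [Finite F]

lemma ncard_outEdges_add (I : LowerSet (InnerEdge F)) :
    (outEdges I).ncard + (I : Set (InnerEdge F)).ncard = {c : F | strictBelow c ≤ I}.ncard := by
  rw [← Set.ncard_image_of_injective (I : Set (InnerEdge F)) Subtype.val_injective]
  exact Set.ncard_sdiff_add_ncard_of_subset (image_subset_setOf_strictBelow_le I)

lemma IsBranching.exists_covBy_covBy_ne (hB : IsBranching F) {e : F} (he : ¬ IsMax e) :
    ∃ c c' : F, e ⋖ c ∧ e ⋖ c' ∧ c ≠ c' := by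
  obtain ⟨f, hf⟩ := not_isMax_iff.1 he
  obtain ⟨c, hc, -⟩ := exists_covBy_le_of_lt hf
  obtain ⟨g, hg, hcg⟩ := hB e c hc.lt
  obtain ⟨c', hc', hc'g⟩ := exists_covBy_le_of_lt hg
  exact ⟨c, c', hc, hc', fun h => hcg (h ▸ hc'g)⟩

-- Each edge of `J \ I` has two upper covers, which are reachable from `J` but not from `I`.
lemma two_mul_ncard_sdiff_le (hF : IsForest F) (hB : IsBranching F)
    {I J : LowerSet (InnerEdge F)} :
    2 * ((J : Set (InnerEdge F)) \ I).ncard ≤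
      ({c : F | strictBelow c ≤ J} \ {c | strictBelow c ≤ I}).ncard := by
  choose c c' hc hc' hne using fun e : InnerEdge F => hB.exists_covBy_covBy_ne e.2
  have huniq : ∀ {e e' : InnerEdge F} {x : F}, e.1 ⋖ x → e'.1 ⋖ x → e = e' :=
    fun h h' => Subtype.ext (hF.eq_of_covBy h h')
  have hinj : Function.Injective c := fun e e' h => huniq (hc e) (h ▸ hc e')
  have hinj' : Function.Injective c' := fun e e' h => huniq (hc' e) (h ▸ hc' e')
  have hnew : ∀ {e : InnerEdge F} {x : F}, e ∈ (J : Set (InnerEdge F)) \ I → e.1 ⋖ x →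
      x ∈ {c : F | strictBelow c ≤ J} \ {c | strictBelow c ≤ I} := fun {e} _ he hx =>
    ⟨fun f hf => J.lower (show f ≤ e from hF.le_of_covBy hx hf) he.1, fun h => he.2 (h hx.lt)⟩
  set S := (J : Set (InnerEdge F)) \ I
  have hdisj : Disjoint (c '' S) (c' '' S) := by
    rw [Set.disjoint_left]
    rintro _ ⟨e, -, rfl⟩ ⟨e', -, h⟩
    obtain rfl : e = e' := huniq (hc e) (h ▸ hc' e')
    exact hne e h.symm
  calc 2 * S.ncard = (c '' S ∪ c' '' S).ncard := by
        rw [Set.ncard_union_eq hdisj, Set.ncard_image_of_injective _ hinj,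
          Set.ncard_image_of_injective _ hinj', two_mul]
    _ ≤ _ := by
        refine Set.ncard_le_ncard (union_subset ?_ ?_)
        · rintro _ ⟨e, he, rfl⟩
          exact hnew he (hc e)
        · rintro _ ⟨e, he, rfl⟩
          exact hnew he (hc' e)

lemma ncard_outEdges_strictMono (hF : IsForest F) (hB : IsBranching F) :
    StrictMono fun I : LowerSet (InnerEdge F) => (outEdges I).ncard := by
  intro I J hIJ
  have hsub : {c : F | strictBelow c ≤ I} ⊆ {c | strictBelow c ≤ J} := fun c hc => hc.trans hIJ.le
  have hpos : 0 < ((J : Set (InnerEdge F)) \ I).ncard :=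
    (Set.ncard_pos).2 (Set.sdiff_nonempty.2 hIJ.not_ge)
  have hsdiff := Set.ncard_sdiff_add_ncard_of_subset (show (I : Set (InnerEdge F)) ⊆ J from hIJ.le)
  have hreach := Set.ncard_sdiff_add_ncard_of_subset hsub
  have htwo := two_mul_ncard_sdiff_le hF hB (I := I) (J := J)
  rw [← ncard_outEdges_add, ← ncard_outEdges_add] at hreach
  change (outEdges I).ncard < (outEdges J).ncard
  lia

end Forest

section Strata

variable {Z W : Type*} [TopologicalSpace Z] [TopologicalSpace W]

/-- Every neighbourhood of `z` contains a topological copy of `ℝⁿ`: a topologically invariant way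
to say that the space has local dimension at least `n` at `z`. -/
def HasLocalCell (n : ℕ) (z : Z) : Prop :=
  ∀ U ∈ 𝓝 z, ∃ φ : EuclideanSpace ℝ (Fin n) → Z,
    Continuous φ ∧ Function.Injective φ ∧ ∀ t, φ t ∈ U

/-- `z` and `w` lie in a connected set along which the local dimension is constant. -/
def SameStratum (z w : Z) : Prop :=
  ∃ S : Set Z, IsPreconnected S ∧ z ∈ S ∧ w ∈ S ∧
    ∀ y ∈ S, ∀ n, HasLocalCell n y ↔ HasLocalCell n z

lemma HasLocalCell.map {n : ℕ} {z : Z} (hz : HasLocalCell n z) (h : Z ≃ₜ W) :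
    HasLocalCell n (h z) := by
  intro U hU
  obtain ⟨φ, hφc, hφi, hφU⟩ := hz (h ⁻¹' U) (h.continuous.continuousAt hU)
  exact ⟨h ∘ φ, h.continuous.comp hφc, h.injective.comp hφi, hφU⟩

lemma hasLocalCell_map_iff {n : ℕ} {z : Z} (h : Z ≃ₜ W) :
    HasLocalCell n (h z) ↔ HasLocalCell n z :=
  ⟨fun hz => by simpa using hz.map h.symm, fun hz => hz.map h⟩

lemma SameStratum.map {z w : Z} (hzw : SameStratum z w) (h : Z ≃ₜ W) :
    SameStratum (h z) (h w) := by
  obtain ⟨S, hS, hz, hw, hd⟩ := hzw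
  refine ⟨h '' S, hS.image _ h.continuous.continuousOn, ⟨z, hz, rfl⟩, ⟨w, hw, rfl⟩, ?_⟩
  rintro _ ⟨y, hy, rfl⟩ n
  rw [hasLocalCell_map_iff, hasLocalCell_map_iff, hd y hy n]

end Strata

section CellComplex

lemma continuous_coe_apply {ι : Type*} {R : ι → Type*} [∀ i, TopologicalSpace (R i)]
    {s : Set (∀ i, R i)} (i : ι) : Continuous fun x : s => x.1 i :=
  (continuous_apply i).comp continuous_subtype_val

/-- The space of subcontinua containing the root of a tree with set of edges `F`. A subcontinuum is
recorded by the lengths of the initial parts of the edges it contains, all edges having length `1`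
and being ordered away from the root. -/
def cellComplex (F : Type*) [PartialOrder F] : Set (F → ℝ) :=
  {x | (∀ e, x e ∈ Icc (0 : ℝ) 1) ∧ ∀ e f, 0 < x e → f < e → x f = 1}

variable {F : Type*} [PartialOrder F]

/-- The inner edges completely contained in the subcontinuum `x`. -/
def fullEdges (x : cellComplex F) : LowerSet (InnerEdge F) where
  carrier := {e | x.1 e = 1}
  lower' a b hba (ha : x.1 a = 1) := by
    rcases hba.eq_or_lt with rfl | h
    · exact ha
    · exact x.2.2 a b (by rw [ha]; exact one_pos) h

lemma mem_fullEdges {x : cellComplex F} {e : InnerEdge F} : e ∈ fullEdges x ↔ x.1 e = 1 := Iff.rfl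

lemma strictBelow_le_fullEdges {x : cellComplex F} {c : F} (hc : 0 < x.1 c) :
    strictBelow c ≤ fullEdges x := fun f hf => x.2.2 c f hc hf

lemma eq_zero_of_notMem_outEdges {x : cellComplex F} {c : F} (hout : c ∉ outEdges (fullEdges x))
    (hfull : c ∉ Subtype.val '' (fullEdges x : Set (InnerEdge F))) : x.1 c = 0 :=
  le_antisymm (not_lt.1 fun hpos => hout ⟨strictBelow_le_fullEdges hpos, hfull⟩) (x.2.1 c).1

lemma cellComplex_ext {x y : cellComplex F} (hI : fullEdges x = fullEdges y)
    (h : ∀ c ∈ outEdges (fullEdges x), x.1 c = y.1 c) : x = y := by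
  refine Subtype.ext (funext fun c => ?_)
  by_cases hout : c ∈ outEdges (fullEdges x)
  · exact h c hout
  by_cases hfull : c ∈ Subtype.val '' (fullEdges x : Set (InnerEdge F))
  · obtain ⟨e, he, rfl⟩ := hfull
    exact (mem_fullEdges.1 he).trans (mem_fullEdges.1 (hI ▸ he)).symm
  · rw [eq_zero_of_notMem_outEdges hout hfull, eq_zero_of_notMem_outEdges (hI ▸ hout) (hI ▸ hfull)]

lemma mem_cellComplex_of_eqOn_compl_outEdges (x : cellComplex F) {z : F → ℝ}
    (hz : ∀ e, z e ∈ Icc (0 : ℝ) 1) (hzx : EqOn z x.1 (outEdges (fullEdges x))ᶜ) :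
    z ∈ cellComplex F := by
  refine ⟨hz, fun e f he hfe => ?_⟩
  have hf : (⟨f, not_isMax_of_lt hfe⟩ : InnerEdge F) ∈ fullEdges x := by
    by_cases hout : e ∈ outEdges (fullEdges x)
    · exact hout.1 hfe
    · exact x.2.2 e f (hzx hout ▸ he) hfe
  rw [hzx fun hout => hout.2 ⟨_, hf, rfl⟩]
  exact hf

lemma openSegment_subset_image_fullEdges {x y : cellComplex F}
    (h : ∀ e f, f < e → 0 < x.1 e ∨ 0 < y.1 e → x.1 f = 1 ∧ y.1 f = 1) :
    openSegment ℝ x.1 y.1 ⊆ Subtype.val '' {z | fullEdges z = fullEdges x ⊓ fullEdges y} := by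
  rintro _ ⟨a, b, ha, hb, hab, rfl⟩
  have hmem : a • x.1 + b • y.1 ∈ cellComplex F := by
    refine ⟨fun e => convex_Icc 0 1 (x.2.1 e) (y.2.1 e) ha.le hb.le hab, fun e f he hfe => ?_⟩
    have hpos : 0 < x.1 e ∨ 0 < y.1 e := by
      by_contra! hle
      have : a * x.1 e + b * y.1 e ≤ 0 := add_nonpos
        (mul_nonpos_of_nonneg_of_nonpos ha.le hle.1) (mul_nonpos_of_nonneg_of_nonpos hb.le hle.2)
      exact this.not_gt he
    simp [h e f hfe hpos, hab]
  refine ⟨⟨_, hmem⟩, LowerSet.ext (Set.ext fun e => ?_), rfl⟩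
  change a * x.1 e + b * y.1 e = 1 ↔ x.1 e = 1 ∧ y.1 e = 1
  refine ⟨fun heq => ⟨le_antisymm (x.2.1 e).2 ?_, le_antisymm (y.2.1 e).2 ?_⟩, fun heq => ?_⟩
  · nlinarith [(y.2.1 e).2]
  · nlinarith [(x.2.1 e).2]
  · rw [heq.1, heq.2, mul_one, mul_one, hab]

lemma isPreconnected_setOf_fullEdges_eq (I : LowerSet (InnerEdge F)) :
    IsPreconnected {x : cellComplex F | fullEdges x = I} := by
  rw [← IsInducing.subtypeVal.isPreconnected_image]
  refine (convex_iff_openSegment_subset (𝕜 := ℝ).2 ?_).isPreconnected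
  rintro _ ⟨x, rfl, rfl⟩ _ ⟨y, hyx, rfl⟩
  refine (openSegment_subset_image_fullEdges fun e f hfe hpos => ?_).trans
    (by rw [show fullEdges y = fullEdges x from hyx, inf_idem])
  let f' : InnerEdge F := ⟨f, not_isMax_of_lt hfe⟩
  rcases hpos with hpos | hpos
  · have hf : f' ∈ fullEdges x := x.2.2 e f hpos hfe
    exact ⟨hf, (hyx ▸ hf : f' ∈ fullEdges y)⟩
  · have hf : f' ∈ fullEdges y := y.2.2 e f hpos hfe
    exact ⟨(hyx ▸ hf : f' ∈ fullEdges x), hf⟩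

section LocalDimension

variable [Finite F]

lemma eventually_fullEdges_le (x : cellComplex F) : ∀ᶠ y in 𝓝 x, fullEdges y ≤ fullEdges x := by
  have h : ∀ e : InnerEdge F, ∀ᶠ y : cellComplex F in 𝓝 x, y.1 e = 1 → x.1 e = 1 := by
    intro e
    by_cases he : x.1 e = 1
    · exact Filter.Eventually.of_forall fun _ _ => he
    · filter_upwards [(continuous_coe_apply e.1).continuousAt.eventually_ne he] with y hy hy1
      exact absurd hy1 hy
  filter_upwards [Filter.eventually_all.2 h] with y hy e he
  exact hy e he

lemma HasLocalCell.le_ncard (hF : IsForest F) (hB : IsBranching F) {n : ℕ} {x : cellComplex F}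
    (hx : HasLocalCell n x) : n ≤ (outEdges (fullEdges x)).ncard := by
  obtain ⟨φ, hφc, hφi, hφU⟩ := hx _ (eventually_fullEdges_le x)
  obtain ⟨_, hmin⟩ := (Set.toFinite (range fun t => fullEdges (φ t))).exists_minimal
    (range_nonempty _)
  obtain ⟨t, rfl⟩ := hmin.prop
  have hconst : ∀ᶠ s in 𝓝 t, fullEdges (φ s) = fullEdges (φ t) := by
    filter_upwards [hφc.continuousAt.eventually (eventually_fullEdges_le (φ t))] with s hs
    exact le_antisymm hs (hmin.le_of_le ⟨s, rfl⟩ hs)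
  refine le_trans ?_ ((ncard_outEdges_strictMono hF hB).monotone (hφU t))
  by_contra! hlt
  have := Fintype.ofFinite (outEdges (fullEdges (φ t)))
  -- Near `t` the map `φ` is determined by its coordinates on the edges leaving `φ t`.
  refine not_injOn_of_finrank_lt (V := outEdges (fullEdges (φ t)) → ℝ)
    (f := fun s c => (φ s).1 c) ?_ (continuous_pi fun c => (continuous_coe_apply c.1).comp hφc)
    hconst fun s hs s' hs' h => ?_
  · rwa [Module.finrank_fintype_fun_eq_card, finrank_euclideanSpace_fin,
      ← Nat.card_eq_fintype_card, Nat.card_coe_set_eq]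
  · refine hφi (cellComplex_ext (Eq.trans hs hs'.symm) fun c hc => ?_)
    exact congrFun h ⟨c, (show fullEdges (φ s) = _ from hs) ▸ hc⟩

lemma exists_continuous_injective_eqOn_compl {ι : Type*} [Finite ι] {n : ℕ} {s : Set ι}
    (hn : n ≤ s.ncard) {x : ι → ℝ} (hx : ∀ c, x c ∈ Icc (0 : ℝ) 1) :
    ∃ y : EuclideanSpace ℝ (Fin n) → ι → ℝ, Continuous y ∧ Function.Injective y ∧
      (∀ t c, y t c ∈ Icc (0 : ℝ) 1) ∧ ∀ t, EqOn (y t) x sᶜ := by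
  obtain ⟨e⟩ : Nonempty (Fin n ↪ s) := by
    have := Fintype.ofFinite s
    refine Function.Embedding.nonempty_of_card_le ?_
    rwa [Fintype.card_fin, ← Nat.card_eq_fintype_card, Nat.card_coe_set_eq]
  let j : Fin n → ι := fun i => (e i).1
  have hj : Function.Injective j := Subtype.val_injective.comp e.injective
  let y : EuclideanSpace ℝ (Fin n) → ι → ℝ :=
    fun t => Function.extend j (fun i => Real.sigmoid (t i)) x
  have hyj : ∀ t i, y t (j i) = Real.sigmoid (t i) := fun t i => hj.extend_apply _ _ i
  have hyx : ∀ t c, c ∉ range j → y t c = x c := fun t c hc => Function.extend_apply' _ _ c hc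
  refine ⟨y, continuous_pi fun c => ?_, fun t t' h => ?_, fun t c => ?_, fun t c hc => hyx t c ?_⟩
  · by_cases hc : c ∈ range j
    · obtain ⟨i, rfl⟩ := hc
      simp only [hyj]
      fun_prop
    · simp only [hyx _ c hc]
      fun_prop
  · ext i
    exact Real.sigmoid_injective (by rw [← hyj, ← hyj, h])
  · by_cases hc : c ∈ range j
    · obtain ⟨i, rfl⟩ := hc
      rw [hyj]
      exact ⟨Real.sigmoid_nonneg _, Real.sigmoid_le_one _⟩
    · rw [hyx t c hc]
      exact hx c
  · rintro ⟨i, rfl⟩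
    exact hc (e i).2

lemma hasLocalCell_of_le_ncard {n : ℕ} {x : cellComplex F}
    (hn : n ≤ (outEdges (fullEdges x)).ncard) : HasLocalCell n x := by
  have := Fintype.ofFinite F
  intro U hU
  obtain ⟨ε, hε, hball⟩ := Metric.mem_nhds_iff.1 hU
  obtain ⟨δ, hδ0, hδ⟩ := exists_between (lt_min hε one_pos)
  obtain ⟨hδε, hδ1⟩ := lt_min_iff.1 hδ
  obtain ⟨y, hyc, hyi, hy, hyx⟩ := exists_continuous_injective_eqOn_compl hn x.2.1
  let ψ : EuclideanSpace ℝ (Fin n) → F → ℝ := fun t c => AffineMap.lineMap (x.1 c) (y t c) δ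
  have hψ : ∀ t, ψ t ∈ cellComplex F := fun t =>
    mem_cellComplex_of_eqOn_compl_outEdges x
      (fun c => (convex_Icc 0 1).lineMap_mem (x.2.1 c) (hy t c) ⟨hδ0.le, hδ1.le⟩)
      fun c hc => by simp [ψ, hyx t hc]
  have hψc : Continuous ψ := by
    simp only [ψ, AffineMap.lineMap_apply_module]
    fun_prop
  refine ⟨fun t => ⟨ψ t, hψ t⟩, hψc.subtype_mk _, fun t t' h => hyi ?_, fun t => hball ?_⟩
  · ext c
    have hc : ψ t c = ψ t' c := congrFun (congrArg Subtype.val h) c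
    simpa [ψ, AffineMap.lineMap_apply_module, hδ0.ne'] using hc
  · refine lt_of_le_of_lt ((dist_pi_le_iff hδ0.le).2 fun c => ?_) hδε
    change dist (AffineMap.lineMap (x.1 c) (y t c) δ) (x.1 c) ≤ δ
    rw [dist_lineMap_left, Real.norm_of_nonneg hδ0.le]
    exact mul_le_of_le_one_right hδ0.le
      ((Real.dist_le_of_mem_Icc (x.2.1 c) (hy t c)).trans_eq (sub_zero 1))

lemma hasLocalCell_iff (hF : IsForest F) (hB : IsBranching F) {n : ℕ} {x : cellComplex F} :
    HasLocalCell n x ↔ n ≤ (outEdges (fullEdges x)).ncard :=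
  ⟨fun h => h.le_ncard hF hB, hasLocalCell_of_le_ncard⟩

lemma sameStratum_iff (hF : IsForest F) (hB : IsBranching F) {x y : cellComplex F} :
    SameStratum x y ↔ fullEdges x = fullEdges y := by
  constructor
  · rintro ⟨S, hS, hx, hy, hd⟩
    have hdim : ∀ z ∈ S, (outEdges (fullEdges z)).ncard = (outEdges (fullEdges x)).ncard := by
      intro z hz
      have hn := hd z hz
      simp only [hasLocalCell_iff hF hB] at hn
      exact eq_of_forall_le_iff hn
    refine hS.induction₂ (fun z w => fullEdges z = fullEdges w) (fun z hz => ?_)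
      (fun _ _ _ _ _ _ => Eq.trans) (fun _ _ _ _ => Eq.symm) hx hy
    filter_upwards [mem_nhdsWithin_of_mem_nhds (eventually_fullEdges_le z),
      self_mem_nhdsWithin] with w hw hwS
    by_contra hne
    exact (ncard_outEdges_strictMono hF hB (lt_of_le_of_ne hw (Ne.symm hne))).ne
      ((hdim w hwS).trans (hdim z hz).symm)
  · intro h
    refine ⟨{z | fullEdges z = fullEdges y}, isPreconnected_setOf_fullEdges_eq _, h, rfl, ?_⟩
    intro z hz n
    rw [hasLocalCell_iff hF hB, hasLocalCell_iff hF hB, h, show fullEdges z = _ from hz]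

end LocalDimension

/-- The subtree consisting of the inner edges in `I`. -/
noncomputable def subtreePoint (I : LowerSet (InnerEdge F)) : cellComplex F :=
  ⟨(Subtype.val '' (I : Set (InnerEdge F))).indicator 1, by
    refine ⟨fun e => ⟨indicator_nonneg (by simp) e, indicator_le_self' (by simp) e⟩,
      fun e f he hfe => ?_⟩
    obtain ⟨e, heI, rfl⟩ := mem_of_indicator_ne_zero he.ne'
    let f' : InnerEdge F := ⟨f, not_isMax_of_lt hfe⟩
    have hf : f ∈ Subtype.val '' (I : Set (InnerEdge F)) :=
      ⟨f', I.lower (show f' ≤ e from hfe.le) heI, rfl⟩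
    exact indicator_of_mem hf 1⟩

lemma subtreePoint_apply_eq_one_iff {I : LowerSet (InnerEdge F)} {e : F} :
    (subtreePoint I).1 e = 1 ↔ e ∈ Subtype.val '' (I : Set (InnerEdge F)) :=
  indicator_eq_one_iff_mem ℝ

lemma fullEdges_subtreePoint (I : LowerSet (InnerEdge F)) : fullEdges (subtreePoint I) = I := by
  refine LowerSet.ext (Set.ext fun e => ?_)
  simp only [SetLike.mem_coe, mem_fullEdges, subtreePoint_apply_eq_one_iff,
    Subtype.val_injective.mem_set_image]

lemma mem_of_lt_of_covBy {α : Type*} [PartialOrder α] {I J : LowerSet α} (h : J ⋖ I)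
    {e f : α} (hef : e < f) (hf : f ∈ I) : e ∈ J := by
  by_contra he
  have hfJ : f ∉ J := fun hf => he (J.lower hef.le hf)
  refine h.2 (c := J ⊔ LowerSet.Iic e) ?_ ?_
  · exact left_lt_sup.2 (LowerSet.Iic_le.not.2 he)
  · refine lt_of_le_of_ne (sup_le h.le (LowerSet.Iic_le.2 (I.lower hef.le hf))) fun heq => ?_
    rcases (heq ▸ hf : f ∈ J ⊔ LowerSet.Iic e) with hf' | hf'
    · exact hfJ hf'
    · exact hef.not_ge hf'

lemma subtreePoint_mem_closure {I J : LowerSet (InnerEdge F)} (h : J ⋖ I) :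
    subtreePoint I ∈ closure {y | fullEdges y = J} := by
  rw [closure_subtype]
  have hseg := openSegment_subset_image_fullEdges (x := subtreePoint I) (y := subtreePoint J) ?_
  · rw [fullEdges_subtreePoint, fullEdges_subtreePoint, inf_eq_right.2 h.le] at hseg
    exact closure_mono hseg (segment_subset_closure_openSegment (left_mem_segment ℝ _ _))
  · intro e f hfe hpos
    have heI : e ∈ Subtype.val '' (I : Set (InnerEdge F)) := by
      rcases hpos with hpos | hpos
      · exact mem_of_indicator_ne_zero hpos.ne'
      · exact image_mono h.le (mem_of_indicator_ne_zero hpos.ne')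
    obtain ⟨e, he, rfl⟩ := heI
    let f' : InnerEdge F := ⟨f, not_isMax_of_lt hfe⟩
    have hfJ : f' ∈ J := mem_of_lt_of_covBy h (show f' < e from hfe) he
    exact ⟨subtreePoint_apply_eq_one_iff.2 ⟨f', h.le hfJ, rfl⟩,
      subtreePoint_apply_eq_one_iff.2 ⟨f', hfJ, rfl⟩⟩

end CellComplex

section StratumMap

variable {F G : Type*} [PartialOrder F] [PartialOrder G]

/-- The action of a homeomorphism on the strata, which are indexed by the sets of full edges. -/
noncomputable def stratumMap (h : cellComplex F ≃ₜ cellComplex G) (I : LowerSet (InnerEdge F)) :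
    LowerSet (InnerEdge G) := fullEdges (h (subtreePoint I))

variable [Finite F] [Finite G]

lemma fullEdges_apply (hF : IsForest F) (hBF : IsBranching F) (hG : IsForest G)
    (hBG : IsBranching G) (h : cellComplex F ≃ₜ cellComplex G) (x : cellComplex F) :
    fullEdges (h x) = stratumMap h (fullEdges x) :=
  (sameStratum_iff hG hBG).1 (((sameStratum_iff hF hBF).2 (fullEdges_subtreePoint _).symm).map h)

lemma stratumMap_monotone (hF : IsForest F) (hBF : IsBranching F) (hG : IsForest G)
    (hBG : IsBranching G) (h : cellComplex F ≃ₜ cellComplex G) :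
    Monotone (stratumMap h) := by
  classical
  have : Fintype (LowerSet (InnerEdge F)) := Fintype.ofFinite _
  let := Fintype.toLocallyFiniteOrder (α := LowerSet (InnerEdge F))
  refine (monotone_iff_forall_covBy _).2 fun J I hJI => ?_
  obtain ⟨y, hy, rfl⟩ := mem_closure_iff_nhds.1 (subtreePoint_mem_closure hJI) _
    (h.continuous.continuousAt (eventually_fullEdges_le (h (subtreePoint I))))
  rw [← fullEdges_apply hF hBF hG hBG]
  exact hy

lemma stratumMap_symm_stratumMap (hF : IsForest F) (hBF : IsBranching F) (hG : IsForest G)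
    (hBG : IsBranching G) (h : cellComplex F ≃ₜ cellComplex G) (I : LowerSet (InnerEdge F)) :
    stratumMap h.symm (stratumMap h I) = I := by
  rw [stratumMap.eq_1 h, ← fullEdges_apply hG hBG hF hBF, h.symm_apply_apply,
    fullEdges_subtreePoint]

lemma exists_orderIso_lowerSet_of_homeomorph (hF : IsForest F) (hBF : IsBranching F)
    (hG : IsForest G) (hBG : IsBranching G) (h : cellComplex F ≃ₜ cellComplex G) :
    ∃ Φ : LowerSet (InnerEdge F) ≃o LowerSet (InnerEdge G),
      ∀ I, (outEdges (Φ I)).ncard = (outEdges I).ncard := by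
  refine ⟨Equiv.toOrderIso ⟨stratumMap h, stratumMap h.symm,
    stratumMap_symm_stratumMap hF hBF hG hBG h, stratumMap_symm_stratumMap hG hBG hF hBF h.symm⟩
    (stratumMap_monotone hF hBF hG hBG h) (stratumMap_monotone hG hBG hF hBF h.symm),
    fun I => eq_of_forall_le_iff fun n => ?_⟩
  have hn := hasLocalCell_map_iff (n := n) (z := subtreePoint I) h
  rw [hasLocalCell_iff hG hBG, hasLocalCell_iff hF hBF, fullEdges_subtreePoint] at hn
  exact hn

end StratumMap

section Combinatorics

lemma supIrred_orderIso_apply {α β : Type*} [SemilatticeSup α] [SemilatticeSup β] (Φ : α ≃o β)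
    {a : α} (ha : SupIrred a) : SupIrred (Φ a) := by
  refine ⟨fun h => ha.1 (Φ.isMin_apply.1 h), fun b c hbc => ?_⟩
  have h : Φ.symm b ⊔ Φ.symm c = a := by rw [← Φ.symm.map_sup, hbc, Φ.symm_apply_apply]
  exact (ha.2 h).imp Φ.symm_apply_eq.1 Φ.symm_apply_eq.1

lemma exists_orderIso_of_lowerSet {α β : Type*} [PartialOrder α] [PartialOrder β] [Finite α]
    [Finite β] (Φ : LowerSet α ≃o LowerSet β) : ∃ φ : α ≃o β, ∀ e I, φ e ∈ Φ I ↔ e ∈ I := by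
  have hΦ (e : α) : ∃ e', LowerSet.Iic e' = Φ (LowerSet.Iic e) :=
    LowerSet.supIrred_iff_of_finite.1 (supIrred_orderIso_apply Φ (LowerSet.supIrred_Iic e))
  have hΦsymm (e : β) : ∃ e', LowerSet.Iic e' = Φ.symm (LowerSet.Iic e) :=
    LowerSet.supIrred_iff_of_finite.1 (supIrred_orderIso_apply Φ.symm (LowerSet.supIrred_Iic e))
  choose f hf using hΦ
  choose g hg using hΦsymm
  refine ⟨⟨⟨f, g, fun e => ?_, fun e => ?_⟩, fun {a b} => ?_⟩, fun e I => ?_⟩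
  · exact LowerSet.Iic_injective (by rw [hg, hf, Φ.symm_apply_apply])
  · exact LowerSet.Iic_injective (by rw [hf, hg, Φ.apply_symm_apply])
  · change f a ≤ f b ↔ a ≤ b
    rw [← LowerSet.mem_Iic_iff, ← LowerSet.Iic_le, hf, hf, Φ.le_iff_le, LowerSet.Iic_le,
      LowerSet.mem_Iic_iff]
  · change f e ∈ Φ I ↔ e ∈ I
    rw [← LowerSet.Iic_le, hf, Φ.le_iff_le, LowerSet.Iic_le]

lemma ncard_setOf_le_eq {α L : Type*} [Finite α] [Finite L] [PartialOrder L] (s : α → L) (J : L) :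
    {a | s a ≤ J}.ncard = (∑ᶠ K ∈ Iio J, {a | s a = K}.ncard) + {a | s a = J}.ncard := by
  have hunion : {a | s a ≤ J} = (⋃ K ∈ Iio J, {a | s a = K}) ∪ {a | s a = J} := by
    ext a
    simp [le_iff_lt_or_eq]
  have hdisj : Disjoint (⋃ K ∈ Iio J, {a | s a = K}) {a | s a = J} :=
    Set.disjoint_left.2 fun a ha (haJ : s a = J) => by simp [haJ] at ha
  rw [hunion, Set.ncard_union_eq hdisj, (toFinite (Iio J)).ncard_biUnion fun _ _ => toFinite _]
  exact fun K _ K' _ hKK' => Set.disjoint_left.2 fun a hK hK' => hKK' (hK.symm.trans hK')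

lemma ncard_fiber_eq_of_ncard_le_eq {α β L : Type*} [Finite α] [Finite β] [Finite L]
    [PartialOrder L] {s : α → L} {t : β → L}
    (h : ∀ J, {a | s a ≤ J}.ncard = {b | t b ≤ J}.ncard) (J : L) :
    {a | s a = J}.ncard = {b | t b = J}.ncard := by
  induction J using WellFoundedLT.induction with
  | ind J ih =>
    have hJ := h J
    rw [ncard_setOf_le_eq, ncard_setOf_le_eq, finsum_mem_congr (s := Iio J) rfl ih] at hJ
    exact Nat.add_left_cancel hJ

lemma exists_equiv_eqOn_of_ncard_fiber_eq {α β ι : Type*} [Finite α] [Finite β] {s : α → ι}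
    {t : β → ι} (h : ∀ i, {a | s a = i}.ncard = {b | t b = i}.ncard) {A : Set α} {f : A → β}
    (hf : Function.Injective f) (hst : ∀ a, t (f a) = s a) :
    ∃ ψ : α ≃ β, (∀ a : A, ψ a = f a) ∧ ∀ a, t (ψ a) = s a := by
  classical
  have hd (a : α) : ∃ b, t b = s a := by
    have : {b | t b = s a}.Nonempty := by
      rw [← Set.ncard_pos, ← h, Set.ncard_pos]
      exact ⟨a, rfl⟩
    exact this
  choose d hd using hd
  let g : α → β := Function.extend Subtype.val f d
  have hg (a : A) : g a = f a := Subtype.val_injective.extend_apply f d a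
  have hgt (a : α) : t (g a) = s a := by
    by_cases ha : a ∈ A
    · rw [hg ⟨a, ha⟩, hst]
    · rw [show g a = d a from Function.extend_apply' _ _ _ (by simpa using ha), hd]
  have hext (i : ι) : ∃ ψ : {a // s a = i} ≃ {b // t b = i},
      ∀ a (ha : a ∈ A), ∀ hi : s a = i, (ψ ⟨a, hi⟩ : β) = f ⟨a, ha⟩ := by
    have := Fintype.ofFinite {a // s a = i}
    have hmaps : MapsTo (fun a : {a // s a = i} => g a) {a | a.1 ∈ A}
        (toFinite {b | t b = i}).toFinset := fun a _ => by simp [hgt, a.2]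
    have hinj : InjOn (fun a : {a // s a = i} => g a) {a | a.1 ∈ A} := by
      intro a ha b hb hab
      have hfab : f ⟨a, ha⟩ = f ⟨b, hb⟩ := (hg ⟨a, ha⟩).symm.trans (hab.trans (hg ⟨b, hb⟩))
      exact Subtype.ext (Subtype.mk.inj (hf hfab))
    obtain ⟨ψ, hψ⟩ := hmaps.exists_equiv_extend_of_card_eq
      (by rw [← Nat.card_eq_fintype_card, ← Set.ncard_eq_toFinset_card]; exact h i) hinj
    refine ⟨ψ.trans (Equiv.subtypeEquivRight fun b => by simp), fun a ha hi => ?_⟩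
    exact (hψ ⟨a, hi⟩ ha).trans (hg ⟨a, ha⟩)
  choose ψ hψ using hext
  refine ⟨Equiv.ofFiberEquiv ψ, fun a => ?_, Equiv.ofFiberEquiv_map ψ⟩
  exact hψ _ a a.2 rfl

variable {F G : Type*} [PartialOrder F] [PartialOrder G] [Finite F] [Finite G]

lemma exists_orderIso_of_outEdges (Φ : LowerSet (InnerEdge F) ≃o LowerSet (InnerEdge G))
    (h : ∀ I, (outEdges (Φ I)).ncard = (outEdges I).ncard) : Nonempty (F ≃o G) := by
  obtain ⟨φ, hφ⟩ := exists_orderIso_of_lowerSet Φ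
  have hcard (I) : (Φ I : Set (InnerEdge G)).ncard = (I : Set (InnerEdge F)).ncard := by
    rw [← Set.ncard_image_of_injective _ φ.injective]
    refine congrArg _ (Set.ext fun g => ?_)
    obtain ⟨e, rfl⟩ := φ.surjective g
    exact (hφ e I).trans (φ.injective.mem_set_image).symm
  have hle (J) : {c | Φ (strictBelow c) ≤ J}.ncard = {c : G | strictBelow c ≤ J}.ncard := by
    obtain ⟨I, rfl⟩ := Φ.surjective J
    simp only [Φ.le_iff_le]
    rw [← ncard_outEdges_add, ← ncard_outEdges_add, h, hcard]
  have hφΦ (c : InnerEdge F) : strictBelow (φ c).1 = Φ (strictBelow c.1) := by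
    ext g
    obtain ⟨e, rfl⟩ := φ.surjective g
    rw [SetLike.mem_coe, SetLike.mem_coe, hφ, mem_strictBelow, mem_strictBelow]
    exact φ.lt_iff_lt
  obtain ⟨ψ, hψφ, hψΦ⟩ := exists_equiv_eqOn_of_ncard_fiber_eq
    (ncard_fiber_eq_of_ncard_le_eq hle) (A := {c | ¬ IsMax c}) (f := fun c => (φ c).1)
    (Subtype.val_injective.comp φ.injective) hφΦ
  have hmax {c : F} (hc : IsMax c) : IsMax (ψ c) := by
    by_contra hmax
    obtain ⟨e, he⟩ := φ.surjective ⟨ψ c, hmax⟩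
    exact e.2 (ψ.injective ((hψφ e).trans (congrArg Subtype.val he)) ▸ hc)
  have hlt (a b : F) : ψ a < ψ b ↔ a < b := by
    by_cases ha : IsMax a
    · exact iff_of_false (hmax ha).not_lt ha.not_lt
    · rw [hψφ ⟨a, ha⟩, ← mem_strictBelow, hψΦ, hφ, mem_strictBelow]
  exact ⟨⟨ψ, fun {a b} => by rw [le_iff_lt_or_eq, le_iff_lt_or_eq, hlt, ψ.apply_eq_iff_eq]⟩⟩

theorem exists_orderIso_of_homeomorph (hF : IsForest F) (hBF : IsBranching F) (hG : IsForest G)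
    (hBG : IsBranching G) (h : cellComplex F ≃ₜ cellComplex G) : Nonempty (F ≃o G) :=
  let ⟨Φ, hΦ⟩ := exists_orderIso_lowerSet_of_homeomorph hF hBF hG hBG h
  exists_orderIso_of_outEdges Φ hΦ

end Combinatorics

section Realization

variable {F : Type*} [PartialOrder F]

variable (F) in
/-- The geometric realization of a forest of edges as a tree with a root: the subtrees which are
arcs starting at the root, an arc standing for its other end point. -/
def realization : Set (F → ℝ) := {x ∈ cellComplex F | ∀ e f, 0 < x e → 0 < x f → e ≤ f ∨ f ≤ e}

lemma isClosed_cellComplex : IsClosed (cellComplex F) := by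
  have h : cellComplex F = (⋂ e, {x : F → ℝ | x e ∈ Icc (0 : ℝ) 1}) ∩
      ⋂ e, ⋂ f, ⋂ _ : f < e, ({x : F → ℝ | x e ≤ 0} ∪ {x | x f = 1}) := by
    ext x
    simp only [cellComplex, mem_ofPred_eq, mem_inter_iff, mem_iInter, mem_union,
      ← not_lt (b := x _), ← imp_iff_not_or]
    exact and_congr_right fun _ => forall₂_congr fun e f => imp.swap
  rw [h]
  refine (isClosed_iInter fun e => isClosed_Icc.preimage (continuous_apply e)).inter ?_
  refine isClosed_iInter fun e => isClosed_iInter fun f => isClosed_iInter fun _ => ?_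
  exact (isClosed_le (continuous_apply e) continuous_const).union
    (isClosed_eq (continuous_apply f) continuous_const)

lemma isClosed_realization : IsClosed (realization F) := by
  have h : realization F = cellComplex F ∩
      ⋂ e, ⋂ f, ⋂ _ : ¬ (e ≤ f ∨ f ≤ e), ({x : F → ℝ | x e ≤ 0} ∪ {x | x f ≤ 0}) := by
    ext x
    simp only [realization, mem_ofPred_eq, mem_inter_iff, mem_iInter, mem_union]
    refine and_congr_right fun _ => forall₂_congr fun e f => ?_
    rw [← not_lt, ← not_lt, ← not_and_or, not_imp_not, and_imp]
  rw [h]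
  refine isClosed_cellComplex.inter ?_
  refine isClosed_iInter fun e => isClosed_iInter fun f => isClosed_iInter fun _ => ?_
  exact (isClosed_le (continuous_apply e) continuous_const).union
    (isClosed_le (continuous_apply f) continuous_const)

lemma isCompact_cellComplex : IsCompact (cellComplex F) :=
  (isCompact_univ_pi fun _ => isCompact_Icc).of_isClosed_subset isClosed_cellComplex
    fun _ hx e _ => hx.1 e

instance : CompactSpace (cellComplex F) := isCompact_iff_compactSpace.1 isCompact_cellComplex

instance : CompactSpace (realization F) := isCompact_iff_compactSpace.1 <|
  isCompact_cellComplex.of_isClosed_subset isClosed_realization fun _ hx => hx.1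

lemma zero_mem_realization : (0 : F → ℝ) ∈ realization F :=
  ⟨⟨fun _ => by simp, fun _ _ h => absurd h (lt_irrefl _)⟩, fun _ _ h => absurd h (lt_irrefl _)⟩

instance : Zero (realization F) := ⟨⟨0, zero_mem_realization⟩⟩

lemma inf_mem_realization {x y : F → ℝ} (hx : x ∈ realization F) (hy : y ∈ cellComplex F) :
    x ⊓ y ∈ realization F := by
  have h : ∀ e, 0 < (x ⊓ y) e → 0 < x e ∧ 0 < y e := fun e he => lt_inf_iff.1 he
  refine ⟨⟨fun e => ⟨le_inf (hx.1.1 e).1 (hy.1 e).1, inf_le_left.trans (hx.1.1 e).2⟩,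
    fun e f he hfe => ?_⟩, fun e f he hf => hx.2 e f (h e he).1 (h f hf).1⟩
  rw [Pi.inf_apply, hx.1.2 e f (h e he).1 hfe, hy.2 e f (h e he).2 hfe, inf_idem]

open Classical in
/-- The point at height `s` on the edge `e`. -/
noncomputable def edgePoint (e : F) (s : ℝ) : F → ℝ :=
  fun f => if f < e then 1 else if f = e then s else 0

@[simp] lemma edgePoint_self (e : F) (s : ℝ) : edgePoint e s e = s := by simp [edgePoint]

lemma edgePoint_of_lt {e f : F} (h : f < e) (s : ℝ) : edgePoint e s f = 1 := if_pos h

lemma edgePoint_of_not_le {e f : F} (h : ¬ f ≤ e) (s : ℝ) : edgePoint e s f = 0 := by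
  rw [edgePoint, if_neg fun hlt => h hlt.le, if_neg fun heq => h heq.le]

lemma le_of_edgePoint_pos {e f : F} {s : ℝ} (h : 0 < edgePoint e s f) : f ≤ e := by
  by_contra hfe
  exact h.ne' (edgePoint_of_not_le hfe s)

lemma continuous_edgePoint (e : F) : Continuous (edgePoint e) := by
  refine continuous_pi fun f => ?_
  unfold edgePoint
  split_ifs <;> fun_prop

lemma edgePoint_mem (hF : IsForest F) (e : F) {s : ℝ} (hs : s ∈ Icc (0 : ℝ) 1) :
    edgePoint e s ∈ realization F := by
  refine ⟨⟨fun f => ?_, fun f g hf hgf => ?_⟩, fun f g hf hg => ?_⟩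
  · unfold edgePoint
    split_ifs
    · exact right_mem_Icc.2 zero_le_one
    · exact hs
    · exact left_mem_Icc.2 zero_le_one
  · exact edgePoint_of_lt (hgf.trans_le (le_of_edgePoint_pos hf)) s
  · exact hF f g e (le_of_edgePoint_pos hf) (le_of_edgePoint_pos hg)

lemma edgePoint_le (k : cellComplex F) {e : F} (he : 0 < k.1 e) : edgePoint e (k.1 e) ≤ k.1 := by
  intro f
  unfold edgePoint
  split_ifs with hlt heq
  · exact (k.2.2 e f he hlt).ge
  · rw [heq]
  · exact (k.2.1 f).1

lemma eq_edgePoint {x : F → ℝ} (hx : x ∈ realization F) {e : F} (he : 0 < x e)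
    (hmax : ∀ f, e < f → x f ≤ 0) : x = edgePoint e (x e) := by
  funext f
  by_cases hfe : f ≤ e
  · rcases hfe.eq_or_lt with rfl | hlt
    · rw [edgePoint_self]
    · rw [edgePoint_of_lt hlt, hx.1.2 e f he hlt]
  · rw [edgePoint_of_not_le hfe]
    refine le_antisymm (not_lt.1 fun hf => ?_) (hx.1.1 f).1
    exact (hmax f (lt_of_le_not_ge ((hx.2 e f he hf).resolve_right hfe) hfe)).not_gt hf

lemma eq_edgePoint_of_lt_one {x : F → ℝ} (hx : x ∈ realization F) {e : F} (he : 0 < x e)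
    (he1 : x e < 1) : x = edgePoint e (x e) :=
  eq_edgePoint hx he fun f hef => not_lt.1 fun hf => he1.ne (hx.1.2 f e hf hef)

lemma exists_eq_edgePoint [Finite F] {x : realization F} (hx : x ≠ 0) :
    ∃ e, 0 < x.1 e ∧ x.1 = edgePoint e (x.1 e) := by
  have hpos : {e | 0 < x.1 e}.Nonempty := by
    by_contra! hzero
    exact hx (Subtype.ext (funext fun e =>
      le_antisymm (not_lt.1 (eq_empty_iff_forall_notMem.1 hzero e)) (x.2.1.1 e).1))
  obtain ⟨e, he⟩ := (toFinite {e | 0 < x.1 e}).exists_maximal hpos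
  refine ⟨e, he.prop, eq_edgePoint x.2 he.prop fun f hef => not_lt.1 fun hf => ?_⟩
  exact hef.not_ge (he.le_of_ge hf hef.le)

/-- The subtree of the realization described by a point of the complex. -/
def subtreeSet (k : cellComplex F) : Set (realization F) := {x | x.1 ≤ k.1}

lemma zero_mem_subtreeSet (k : cellComplex F) : 0 ∈ subtreeSet k := fun e => (k.2.1 e).1

lemma isClosed_subtreeSet (k : cellComplex F) : IsClosed (subtreeSet k) :=
  isClosed_le continuous_subtype_val continuous_const

lemma subtreeSet_subset_iff (hF : IsForest F) {k l : cellComplex F} :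
    subtreeSet k ⊆ subtreeSet l ↔ k.1 ≤ l.1 := by
  refine ⟨fun h e => ?_, fun h x hx => le_trans hx h⟩
  rcases (k.2.1 e).1.eq_or_lt with hzero | hpos
  · exact hzero ▸ (l.2.1 e).1
  · have hle : edgePoint e (k.1 e) ≤ l.1 :=
      h (show (⟨_, edgePoint_mem hF e (k.2.1 e)⟩ : realization F) ∈ subtreeSet k from
        edgePoint_le k hpos)
    simpa only [edgePoint_self] using hle e

lemma truncation_mem_cellComplex {d : F → ℕ} (hd : StrictMono d) (t : ℝ) :
    (fun e => max 0 (min 1 (t - d e))) ∈ cellComplex F := by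
  refine ⟨fun e => ⟨le_max_left _ _, max_le zero_le_one (min_le_left _ _)⟩, fun e f he hfe => ?_⟩
  have hte : 0 < t - d e := (lt_min_iff.1 ((lt_max_iff.1 he).resolve_left (lt_irrefl _))).2
  have hdfe : (d f : ℝ) + 1 ≤ d e := mod_cast hd hfe
  change max 0 (min 1 (t - d f)) = 1
  rw [min_eq_left (by linarith), max_eq_right zero_le_one]

-- Cutting a point off at height `t`, where `0 ≤ t ≤ #F + 1`, gives a path from the root to it.
lemma isConnected_subtreeSet [Finite F] (k : cellComplex F) : IsConnected (subtreeSet k) := by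
  let d : F → ℕ := fun e => (Iio e).ncard
  have hd : StrictMono d := fun e f h => Set.ncard_lt_ncard (Iio_ssubset_Iio h)
  refine ⟨⟨0, zero_mem_subtreeSet k⟩, isPreconnected_of_forall 0 fun x hx => ?_⟩
  let p : ℝ → realization F := fun t =>
    ⟨_, inf_mem_realization x.2 (truncation_mem_cellComplex hd t)⟩
  have hp (t : ℝ) (e : F) : (p t).1 e = min (x.1 e) (max 0 (min 1 (t - d e))) := rfl
  have hpc : Continuous p := Continuous.subtype_mk (continuous_pi fun e => by
    change Continuous fun t => min (x.1 e) (max 0 (min 1 (t - d e)))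
    fun_prop) _
  refine ⟨range p, ?_, ⟨0, Subtype.ext (funext fun e => ?_)⟩,
    ⟨Nat.card F + 1, Subtype.ext (funext fun e => ?_)⟩, isPreconnected_range hpc⟩
  · rintro _ ⟨t, rfl⟩
    exact fun e => (min_le_left _ _).trans (hx e)
  · rw [hp, max_eq_left ((min_le_right _ _).trans (by simp))]
    exact min_eq_right (x.2.1.1 e).1
  · have hde : (d e : ℝ) ≤ Nat.card F := mod_cast Set.ncard_le_card (Iio e)
    rw [hp, min_eq_left (a := (1 : ℝ)) (by linarith), max_eq_right zero_le_one]
    exact min_eq_left (x.2.1.1 e).2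

lemma edgePoint_mem_image {B : Set (realization F)} (hB : IsPreconnected B) (hBc : IsClosed B)
    (h0 : 0 ∈ B) {m : realization F} (hm : m ∈ B) {e : F} {s : ℝ} (hs0 : 0 < s) (hs : s ≤ m.1 e) :
    edgePoint e s ∈ Subtype.val '' B := by
  have hIoo : Ioo 0 (m.1 e) ⊆ edgePoint e ⁻¹' (Subtype.val '' B) := by
    rintro t ⟨ht0, htm⟩
    obtain ⟨y, hyB, rfl⟩ := hB.intermediate_value h0 hm
      (continuous_coe_apply e).continuousOn ⟨ht0.le, htm.le⟩
    exact ⟨y, hyB, eq_edgePoint_of_lt_one y.2 ht0 (htm.trans_le (m.2.1.1 e).2)⟩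
  have hclosed : IsClosed (edgePoint e ⁻¹' (Subtype.val '' B)) :=
    (isClosed_realization.isClosedMap_subtype_val B hBc).preimage (continuous_edgePoint e)
  have hIcc := closure_minimal hIoo hclosed
  rw [closure_Ioo (hs0.trans_le hs).ne] at hIcc
  exact hIcc ⟨hs0.le, hs⟩

lemma exists_subtreeSet_eq [Finite F] {B : Set (realization F)} (hB : IsConnected B)
    (hBc : IsClosed B) (h0 : 0 ∈ B) : ∃ k : cellComplex F, subtreeSet k = B := by
  choose m hmB hm using fun e : F => hBc.isCompact.exists_isMaxOn hB.nonempty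
    (continuous_coe_apply (s := realization F) e).continuousOn
  have hk : (fun e => (m e).1 e) ∈ cellComplex F := by
    refine ⟨fun e => (m e).2.1.1 e, fun e f he hfe => le_antisymm ((m f).2.1.1 f).2 ?_⟩
    rw [← (m e).2.1.2 e f he hfe]
    exact hm f (hmB e)
  refine ⟨⟨_, hk⟩, subset_antisymm (fun x hx => ?_) fun x hx e => hm e hx⟩
  by_cases hx0 : x = 0
  · exact hx0 ▸ h0
  · obtain ⟨e, he, hxe⟩ := exists_eq_edgePoint hx0
    rw [← Subtype.val_injective.mem_set_image (s := B), hxe]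
    exact edgePoint_mem_image hB.isPreconnected hBc h0 (hmB e) he (hx e)

/-- The map sending a point of the complex to a subtree, with values in the hyperspace of the
realization. -/
def subtreeCompacts (k : cellComplex F) : NonemptyCompacts (realization F) :=
  ⟨⟨subtreeSet k, (isClosed_subtreeSet k).isCompact⟩, ⟨0, zero_mem_subtreeSet k⟩⟩

lemma continuous_subtreeCompacts [Finite F] : Continuous (subtreeCompacts (F := F)) := by
  have := Fintype.ofFinite F
  refine (LipschitzWith.of_dist_le_mul (K := 1) fun k l => ?_).continuous
  rw [Metric.NonemptyCompacts.dist_eq, NNReal.coe_one, one_mul]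
  have hnear (k l : cellComplex F) (x) (hx : x ∈ subtreeSet k) :
      ∃ y ∈ subtreeSet l, dist x y ≤ dist k l := by
    refine ⟨⟨x.1 ⊓ l.1, inf_mem_realization x.2 l.2⟩, fun _ => inf_le_right, ?_⟩
    refine (dist_pi_le_iff dist_nonneg).2 fun e => le_trans ?_ (dist_le_pi_dist k.1 l.1 e)
    have hxk : x.1 e ≤ k.1 e := hx e
    change |x.1 e - min (x.1 e) (l.1 e)| ≤ |k.1 e - l.1 e|
    rcases le_total (x.1 e) (l.1 e) with h | h
    · rw [min_eq_left h, sub_self, abs_zero]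
      exact abs_nonneg _
    · rw [min_eq_right h]
      exact abs_le_abs_of_nonneg (by linarith) (by linarith)
  exact Metric.hausdorffDist_le_of_mem_dist dist_nonneg (hnear k l) fun x hx =>
    dist_comm k l ▸ hnear l k x hx

/-- The image under a homeomorphism of the subtree described by a point of the complex. -/
def subtreeCP [Finite F] {X : Type*} [MetricSpace X] (ψ : realization F ≃ₜ X) (k : cellComplex F) :
    CP X (ψ 0) :=
  ⟨(subtreeCompacts k).map ψ ψ.continuous, by
    rw [NonemptyCompacts.coe_map]
    exact ⟨(isConnected_subtreeSet k).image _ ψ.continuous.continuousOn,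
      mem_image_of_mem _ (zero_mem_subtreeSet k)⟩⟩

lemma nonempty_homeomorph_CP [Finite F] (hF : IsForest F) {X : Type*} [MetricSpace X]
    (ψ : realization F ≃ₜ X) : Nonempty (cellComplex F ≃ₜ CP X (ψ 0)) := by
  have hset (k) : ((subtreeCP ψ k).1 : Set X) = ψ '' subtreeSet k := NonemptyCompacts.coe_map _ _
  have hcont : Continuous (subtreeCP ψ) :=
    Continuous.subtype_mk (ψ.continuous.nonemptyCompacts_map.comp continuous_subtreeCompacts) _
  have hinj : Function.Injective (subtreeCP ψ) := by
    intro k l h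
    have hkl : subtreeSet k = subtreeSet l :=
      ψ.injective.image_injective (by rw [← hset, ← hset, h])
    exact Subtype.ext (le_antisymm ((subtreeSet_subset_iff hF).1 hkl.subset)
      ((subtreeSet_subset_iff hF).1 hkl.superset))
  have hsurj : Function.Surjective (subtreeCP ψ) := by
    intro A
    obtain ⟨k, hk⟩ := exists_subtreeSet_eq (B := ψ ⁻¹' A.1) (ψ.isConnected_preimage.2 A.2.1)
      (A.1.isCompact.isClosed.preimage ψ.continuous) A.2.2
    refine ⟨k, Subtype.ext (SetLike.coe_injective ?_)⟩
    rw [hset, hk, image_preimage_eq _ ψ.surjective]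
  exact ⟨hcont.homeoOfEquivCompactToT2 (f := Equiv.ofBijective _ ⟨hinj, hsurj⟩)⟩

variable {G : Type*} [PartialOrder G]

lemma comp_mem_realization (φ : G ≃o F) {x : F → ℝ} (hx : x ∈ realization F) :
    x ∘ φ ∈ realization G :=
  ⟨⟨fun e => hx.1.1 _, fun _ _ he hfe => hx.1.2 _ _ he (φ.lt_iff_lt.2 hfe)⟩,
    fun e f he hf => by simpa using hx.2 (φ e) (φ f) he hf⟩

/-- The homeomorphism of realizations induced by an isomorphism of forests. -/
def realizationCongr (φ : F ≃o G) : realization F ≃ₜ realization G where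
  toFun x := ⟨x.1 ∘ φ.symm, comp_mem_realization φ.symm x.2⟩
  invFun x := ⟨x.1 ∘ φ, comp_mem_realization φ x.2⟩
  left_inv x := by ext; simp
  right_inv x := by ext; simp
  continuous_toFun := Continuous.subtype_mk (continuous_pi fun _ => continuous_coe_apply _) _
  continuous_invFun := Continuous.subtype_mk (continuous_pi fun _ => continuous_coe_apply _) _

lemma realizationCongr_zero (φ : F ≃o G) : realizationCongr φ 0 = 0 := rfl

end Realization

section Merge

variable {F : Type*} {e c : F}

open Classical in
/-- The coordinates of a point of a realization after the edge `e` and the edge `c` following it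
have been merged into the single edge `e`. -/
noncomputable def mergeEdge (e c : F) (x : F → ℝ) : {f // f ≠ c} → ℝ :=
  fun g => if g.1 = e then (x e + x c) / 2 else x g

lemma mergeEdge_self (hec : e ≠ c) (x : F → ℝ) : mergeEdge e c x ⟨e, hec⟩ = (x e + x c) / 2 :=
  if_pos rfl

lemma mergeEdge_of_ne {g : {f // f ≠ c}} (hg : g.1 ≠ e) (x : F → ℝ) : mergeEdge e c x g = x g :=
  if_neg hg

lemma continuous_mergeEdge : Continuous (mergeEdge e c) := by
  refine continuous_pi fun g => ?_
  unfold mergeEdge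
  split_ifs <;> fun_prop

variable [PartialOrder F]

lemma mergeEdge_mem (hec : e < c) (hcov : ∀ f, e < f → c ≤ f) {x : F → ℝ}
    (hx : x ∈ realization F) : mergeEdge e c x ∈ realization {f // f ≠ c} := by
  have hpos (g : {f // f ≠ c}) (hg : 0 < mergeEdge e c x g) : 0 < x g := by
    by_cases hge : g.1 = e
    · rw [mergeEdge, if_pos hge] at hg
      rw [hge]
      rcases (hx.1.1 c).1.eq_or_lt with hc | hc
      · linarith
      · exact hx.1.2 c e hc hec ▸ one_pos
    · rwa [mergeEdge_of_ne hge] at hg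
  refine ⟨⟨fun g => ?_, fun g h hg hhg => ?_⟩, fun g h hg hh => hx.2 g h (hpos g hg) (hpos h hh)⟩
  · unfold mergeEdge
    split_ifs
    · obtain ⟨he, hc⟩ := And.intro (hx.1.1 e) (hx.1.1 c)
      exact ⟨by linarith [he.1, hc.1], by linarith [he.2, hc.2]⟩
    · exact hx.1.1 g
  · have hxh : x h = 1 := hx.1.2 g h (hpos g hg) hhg
    unfold mergeEdge
    split_ifs with hhe
    · have hcg : c < g.1 := lt_of_le_of_ne (hcov g (hhe ▸ hhg)) g.2.symm
      rw [← hhe, hxh, hx.1.2 g c (hpos g hg) hcg]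
      norm_num
    · exact hxh

lemma injOn_mergeEdge (hec : e < c) : InjOn (mergeEdge e c) (realization F) := by
  have hcoord {x : F → ℝ} (hx : x ∈ realization F) :
      x e = min (x e + x c) 1 ∧ x c = x e + x c - min (x e + x c) 1 := by
    rcases (hx.1.1 c).1.eq_or_lt with hc | hc
    · simp [← hc, (hx.1.1 e).2]
    · simp [hx.1.2 c e hc hec, hc.le]
  intro x hx y hy hxy
  have hsum : x e + x c = y e + y c := by
    have h := congrFun hxy ⟨e, hec.ne⟩
    rw [mergeEdge_self, mergeEdge_self] at h
    linarith
  funext f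
  by_cases hfe : f = e
  · rw [hfe, (hcoord hx).1, (hcoord hy).1, hsum]
  by_cases hfc : f = c
  · rw [hfc, (hcoord hx).2, (hcoord hy).2, hsum]
  simpa only [mergeEdge_of_ne (g := ⟨f, hfc⟩) hfe] using congrFun hxy ⟨f, hfc⟩

lemma edgePoint_subtype {P : F → Prop} (e f : {f // P f}) (s : ℝ) :
    edgePoint e s f = edgePoint e.1 s f.1 := by
  classical
  simp only [edgePoint, Subtype.coe_lt_coe, Subtype.ext_iff]

lemma mergeEdge_edgePoint_of_ne (hec : e < c) (hcov : ∀ f, e < f → c ≤ f) {g : {f // f ≠ c}}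
    (hg : g.1 ≠ e) (s : ℝ) : mergeEdge e c (edgePoint g.1 s) = edgePoint g s := by
  funext f
  by_cases hfe : f.1 = e
  · obtain rfl : f = ⟨e, hec.ne⟩ := Subtype.ext hfe
    rw [mergeEdge_self]
    by_cases heg : e < g.1
    · rw [edgePoint_of_lt heg, edgePoint_of_lt ((hcov g heg).lt_of_ne g.2.symm),
        edgePoint_of_lt (show (⟨e, hec.ne⟩ : {f // f ≠ c}) < g from heg)]
      norm_num
    · have heg' : ¬ e ≤ g.1 := fun h => heg (h.lt_of_ne hg.symm)
      rw [edgePoint_of_not_le heg', edgePoint_of_not_le fun h => heg' (hec.le.trans h),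
        edgePoint_of_not_le (show ¬ (⟨e, hec.ne⟩ : {f // f ≠ c}) ≤ g from heg')]
      norm_num
  · rw [mergeEdge_of_ne hfe, edgePoint_subtype]

lemma mergeEdge_edgePoint_left (hec : e < c) (s : ℝ) :
    mergeEdge e c (edgePoint e (2 * s)) = edgePoint ⟨e, hec.ne⟩ s := by
  funext f
  by_cases hfe : f.1 = e
  · obtain rfl : f = ⟨e, hec.ne⟩ := Subtype.ext hfe
    rw [mergeEdge_self, edgePoint_self, edgePoint_of_not_le hec.not_ge, edgePoint_self]
    ring
  · rw [mergeEdge_of_ne hfe, edgePoint_subtype]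
    simp only [edgePoint, hfe, if_false]

lemma mergeEdge_edgePoint_right (hF : IsForest F) (hec : e < c) (hcov : ∀ f, e < f → c ≤ f)
    (s : ℝ) : mergeEdge e c (edgePoint c (2 * s - 1)) = edgePoint ⟨e, hec.ne⟩ s := by
  classical
  have hlt {f : F} (hfe : f ≠ e) : f < c ↔ f < e := by
    refine ⟨fun hfc => ?_, fun h => h.trans hec⟩
    rcases hF f e c hfc.le hec.le with h | h
    · exact h.lt_of_ne hfe
    · exact absurd (hcov f (h.lt_of_ne hfe.symm)) hfc.not_ge
  funext f
  by_cases hfe : f.1 = e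
  · obtain rfl : f = ⟨e, hec.ne⟩ := Subtype.ext hfe
    rw [mergeEdge_self, edgePoint_self, edgePoint_of_lt hec, edgePoint_self]
    ring
  · rw [mergeEdge_of_ne hfe, edgePoint_subtype]
    simp only [edgePoint, hfe, f.2, if_false, hlt hfe]

lemma surjOn_mergeEdge [Finite F] (hF : IsForest F) (hec : e < c) (hcov : ∀ f, e < f → c ≤ f) :
    SurjOn (mergeEdge e c) (realization F) (realization {f // f ≠ c}) := by
  intro y hy
  by_cases hy0 : (⟨y, hy⟩ : realization {f // f ≠ c}) = 0
  · refine ⟨0, zero_mem_realization, (funext fun g => ?_ : mergeEdge e c 0 = 0).trans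
      (congrArg Subtype.val hy0).symm⟩
    simp [mergeEdge]
  obtain ⟨g, hg, hyg⟩ := exists_eq_edgePoint hy0
  change y = edgePoint g (y g) at hyg
  obtain ⟨hy_nonneg, hy_le⟩ := hy.1.1 g
  by_cases hge : g.1 = e
  · obtain rfl : g = ⟨e, hec.ne⟩ := Subtype.ext hge
    rw [hyg]
    rcases le_total (y ⟨e, hec.ne⟩) (1 / 2) with h | h
    · exact ⟨_, edgePoint_mem hF e ⟨by linarith, by linarith⟩, mergeEdge_edgePoint_left hec _⟩
    · exact ⟨_, edgePoint_mem hF c ⟨by linarith, by linarith⟩,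
        mergeEdge_edgePoint_right hF hec hcov _⟩
  · rw [hyg]
    exact ⟨_, edgePoint_mem hF g.1 ⟨hy_nonneg, hy_le⟩, mergeEdge_edgePoint_of_ne hec hcov hge _⟩

lemma exists_homeomorph_merge [Finite F] (hF : IsForest F) (hec : e < c)
    (hcov : ∀ f, e < f → c ≤ f) :
    ∃ h : realization F ≃ₜ realization {f // f ≠ c}, h 0 = 0 := by
  have hmaps : MapsTo (mergeEdge e c) (realization F) (realization {f // f ≠ c}) :=
    fun _ => mergeEdge_mem hec hcov
  have hbij : Function.Bijective hmaps.restrict :=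
    ⟨(injOn_mergeEdge hec).injective.codRestrict _,
      hmaps.restrict_surjective_iff.2 (surjOn_mergeEdge hF hec hcov)⟩
  have hcont : Continuous hmaps.restrict :=
    (continuous_mergeEdge.comp continuous_subtype_val).subtype_mk _
  refine ⟨hcont.homeoOfEquivCompactToT2 (f := Equiv.ofBijective _ hbij), Subtype.ext ?_⟩
  funext g
  change mergeEdge e c 0 g = 0
  simp [mergeEdge]

lemma IsForest.subtype (hF : IsForest F) (P : F → Prop) : IsForest {f // P f} :=
  fun a b c hac hbc => hF a b c hac hbc

end Merge

lemma exists_isBranching {F : Type u} [Finite F] [PartialOrder F] (hF : IsForest F) :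
    ∃ (G : Type u) (_ : Finite G) (_ : PartialOrder G), IsForest G ∧ IsBranching G ∧
      ∃ h : realization F ≃ₜ realization G, h 0 = 0 := by
  induction hn : Nat.card F using Nat.strong_induction_on generalizing F with
  | _ n ih =>
  by_cases hB : IsBranching F
  · exact ⟨F, inferInstance, inferInstance, hF, hB, Homeomorph.refl _, rfl⟩
  · simp only [IsBranching] at hB
    push Not at hB
    obtain ⟨e, c, hec, hcov⟩ := hB
    obtain ⟨h, h0⟩ := exists_homeomorph_merge hF hec hcov
    have hlt : Nat.card {f // f ≠ c} < n := hn ▸ Finite.card_subtype_lt (x := c) (by simp)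
    obtain ⟨G, _, _, hG, hBG, h', h0'⟩ := ih _ hlt (hF.subtype (· ≠ c)) rfl
    exact ⟨G, inferInstance, inferInstance, hG, hBG, h.trans h', by simp [h0, h0']⟩

section Attach

variable {F : Type*} [PartialOrder F]

/-- A point of the realization all of whose coordinates are `0` or `1`: the root or the upper end
point of an edge. -/
def IsVertex (x : realization F) : Prop := ∀ e, x.1 e = 0 ∨ x.1 e = 1

/-- The forest obtained by adding one maximal edge which starts at the point `x` of the
realization. -/
inductive Attach (x : realization F)
  | old (f : F)
  | new

namespace Attach

variable {x : realization F}

instance [Finite F] : Finite (Attach x) :=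
  Finite.of_surjective (fun a : Option F => a.elim new old) fun
    | old f => ⟨some f, rfl⟩
    | new => ⟨none, rfl⟩

instance : PartialOrder (Attach x) where
  le
    | old a, old b => a ≤ b
    | old a, new => x.1 a = 1
    | new, old _ => False
    | new, new => True
  le_refl
    | old a => le_refl a
    | new => trivial
  le_trans
    | old a, old b, old c => le_trans (a := a)
    | old a, old b, new => fun (hab : a ≤ b) (hb : x.1 b = 1) =>
      hab.eq_or_lt.elim (fun h => h ▸ hb) fun h => x.2.1.2 b a (hb ▸ one_pos) h
    | old _, new, new => fun h _ => h
    | new, new, _ => fun _ h => h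
    | _, new, old _ => fun _ h => h.elim
    | new, old _, _ => fun h => h.elim
  le_antisymm
    | old _, old _ => fun h h' => congrArg old (le_antisymm h h')
    | old _, new => fun _ h => h.elim
    | new, old _ => fun h => h.elim
    | new, new => fun _ _ => rfl

lemma old_lt_old {a b : F} : (old a : Attach x) < old b ↔ a < b := by
  rw [lt_iff_le_not_ge, lt_iff_le_not_ge]
  rfl

lemma old_le_new {a : F} : (old a : Attach x) ≤ new ↔ x.1 a = 1 := Iff.rfl

lemma not_new_le_old {a : F} : ¬ (new : Attach x) ≤ old a := id

lemma old_lt_new {a : F} : (old a : Attach x) < new ↔ x.1 a = 1 :=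
  ⟨fun h => h.le, fun h => lt_of_le_not_ge h not_new_le_old⟩

end Attach

open Attach unitInterval

lemma isForest_attach (hF : IsForest F) (x : realization F) : IsForest (Attach x)
  | old a, old b, old c => hF a b c
  | old a, old b, new => fun (ha : x.1 a = 1) (hb : x.1 b = 1) =>
    x.2.2 a b (ha ▸ one_pos) (hb ▸ one_pos)
  | new, new, _ => fun _ _ => Or.inl le_rfl
  | old _, new, new => fun h _ => Or.inl h
  | new, old _, new => fun _ h => Or.inr h
  | new, _, old _ => fun h => absurd h not_new_le_old
  | _, new, old _ => fun _ h => absurd h not_new_le_old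

variable {x : realization F}

/-- The retraction of the realization of the larger forest which contracts the additional edge. -/
def restrictAttach (y : realization (Attach x)) : realization F :=
  ⟨fun f => y.1 (old f), ⟨⟨fun _ => y.2.1.1 _, fun _ _ he hfe =>
    y.2.1.2 _ _ he (old_lt_old.2 hfe)⟩, fun _ _ he hf => y.2.2 _ _ he hf⟩⟩

lemma continuous_restrictAttach : Continuous (restrictAttach (x := x)) :=
  Continuous.subtype_mk (continuous_pi fun f => continuous_coe_apply (old f)) _

lemma ext_attach {y z : realization (Attach x)} (hold : restrictAttach y = restrictAttach z)
    (hnew : y.1 new = z.1 new) : y = z :=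
  Subtype.ext <| funext fun
    | old f => congrFun (congrArg Subtype.val hold) f
    | new => hnew

lemma apply_new_eq_zero_or_restrictAttach_eq (hx : IsVertex x) (y : realization (Attach x)) :
    y.1 new = 0 ∨ restrictAttach y = x := by
  refine (y.2.1.1 new).1.eq_or_lt.imp Eq.symm fun hy => Subtype.ext (funext fun f => ?_)
  change y.1 (old f) = x.1 f
  rcases hx f with hf | hf
  · rw [hf]
    refine le_antisymm (not_lt.1 fun hpos => ?_) (y.2.1.1 _).1
    have hle := (y.2.2 _ _ hpos hy).resolve_right not_new_le_old
    exact zero_ne_one (hf.symm.trans (old_le_new.1 hle))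
  · rw [hf]
    exact y.2.1.2 _ _ hy (old_lt_new.2 hf)

/-- The point of the larger realization over `z`, at height `t` on the additional edge. -/
def extendAttach (hx : IsVertex x) (z : realization F) (t : I) (h : t = 0 ∨ z = x) :
    realization (Attach x) := ⟨fun | old f => z.1 f | new => t, by
  refine ⟨⟨fun | old f => z.2.1.1 f | new => t.2, ?_⟩, ?_⟩
  · rintro (a | _) (b | _) hpos hlt
    · exact z.2.1.2 a b hpos (old_lt_old.1 hlt)
    · exact absurd hlt.le not_new_le_old
    · obtain rfl := h.resolve_left (unitInterval.pos_iff_ne_zero.1 hpos)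
      exact old_lt_new.1 hlt
    · exact absurd hlt (lt_irrefl _)
  · have hle {a : F} (ha : 0 < z.1 a) (ht : 0 < t) : (old a : Attach x) ≤ new := by
      obtain rfl := h.resolve_left ht.ne'
      exact (hx a).resolve_left ha.ne'
    rintro (a | _) (b | _) ha hb
    · exact z.2.2 a b ha hb
    · exact Or.inl (hle ha hb)
    · exact Or.inr (hle hb ha)
    · exact Or.inl le_rfl⟩

lemma isVertex_extendAttach (hx : IsVertex x) {z : realization F} (hz : IsVertex z) {t : I}
    (ht : t = 0 ∨ t = 1) (h : t = 0 ∨ z = x) : IsVertex (extendAttach hx z t h)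
  | old f => hz f
  | new => ht.imp (congrArg Subtype.val) (congrArg Subtype.val)

variable {X : Type*} [TopologicalSpace X] {v w : X} {ψ : realization F → X} {γ : Path v w}

open Classical in
/-- The map on the larger realization which is `ψ` on the old edges and `γ` on the additional
one. -/
noncomputable def attachMap (ψ : realization F → X) (γ : Path v w) (y : realization (Attach x)) :
    X :=
  if y.1 new = 0 then ψ (restrictAttach y) else γ ⟨y.1 new, y.2.1.1 new⟩

lemma attachMap_of_eq_zero {y : realization (Attach x)} (hy : y.1 new = 0) :
    attachMap ψ γ y = ψ (restrictAttach y) := if_pos hy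

lemma attachMap_of_restrictAttach_eq (hxv : ψ x = v) {y : realization (Attach x)}
    (hy : restrictAttach y = x) : attachMap ψ γ y = γ ⟨y.1 new, y.2.1.1 new⟩ := by
  by_cases hnew : y.1 new = 0
  · rw [attachMap_of_eq_zero hnew, hy, hxv]
    simp only [hnew, Icc.mk_zero, Path.source]
  · exact if_neg hnew

lemma continuous_attachMap (hx : IsVertex x) (hψ : Continuous ψ) (hxv : ψ x = v) :
    Continuous (attachMap (x := x) ψ γ) := by
  have hnew : Continuous fun y : realization (Attach x) => y.1 new := continuous_coe_apply new
  have hcover : {y : realization (Attach x) | y.1 new = 0} ∪ {y | restrictAttach y = x} = univ :=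
    eq_univ_of_forall (apply_new_eq_zero_or_restrictAttach_eq hx)
  rw [← continuousOn_univ, ← hcover]
  refine ContinuousOn.union_of_isClosed ?_ ?_ (isClosed_eq hnew continuous_const)
    (isClosed_eq continuous_restrictAttach continuous_const)
  · exact (hψ.comp continuous_restrictAttach).continuousOn.congr fun y => attachMap_of_eq_zero
  · exact (γ.continuous.comp (hnew.subtype_mk _)).continuousOn.congr fun y =>
      attachMap_of_restrictAttach_eq hxv

lemma injective_attachMap (hx : IsVertex x) (hψ : Function.Injective ψ)
    (hγ : Function.Injective γ) (hxv : ψ x = v) (hdisj : ∀ t ≠ 0, γ t ∉ range ψ) :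
    Function.Injective (attachMap (x := x) ψ γ) := by
  have hold {y z : realization (Attach x)} (hy : y.1 new = 0) (hz : restrictAttach z = x)
      (h : attachMap ψ γ y = attachMap ψ γ z) : z.1 new = 0 := by
    rw [attachMap_of_eq_zero hy, attachMap_of_restrictAttach_eq hxv hz] at h
    by_contra hne
    exact hdisj _ (fun h0 => hne (congrArg Subtype.val h0)) ⟨_, h⟩
  have hzero {y z : realization (Attach x)} (hy : y.1 new = 0) (hz : z.1 new = 0)
      (h : attachMap ψ γ y = attachMap ψ γ z) : y = z := by
    rw [attachMap_of_eq_zero hy, attachMap_of_eq_zero hz] at h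
    exact ext_attach (hψ h) (hy.trans hz.symm)
  intro y z h
  rcases apply_new_eq_zero_or_restrictAttach_eq hx y with hy | hy <;>
    rcases apply_new_eq_zero_or_restrictAttach_eq hx z with hz | hz
  · exact hzero hy hz h
  · exact hzero hy (hold hy hz h) h
  · exact hzero (hold hz hy h.symm) hz h
  · rw [attachMap_of_restrictAttach_eq hxv hy, attachMap_of_restrictAttach_eq hxv hz] at h
    exact ext_attach (hy.trans hz.symm) (congrArg Subtype.val (hγ h))

lemma attachMap_extendAttach_zero (hx : IsVertex x) (z : realization F) :
    attachMap ψ γ (extendAttach hx z 0 (Or.inl rfl)) = ψ z := attachMap_of_eq_zero rfl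

lemma attachMap_extendAttach_self (hx : IsVertex x) (hxv : ψ x = v) (t : I) :
    attachMap ψ γ (extendAttach hx x t (Or.inr rfl)) = γ t :=
  attachMap_of_restrictAttach_eq hxv rfl

lemma range_attachMap (hx : IsVertex x) (hxv : ψ x = v) :
    range (attachMap (x := x) ψ γ) = range ψ ∪ range γ := by
  refine subset_antisymm (range_subset_iff.2 fun y => ?_) (union_subset ?_ ?_)
  · rcases apply_new_eq_zero_or_restrictAttach_eq hx y with hy | hy
    · exact Or.inl ⟨_, (attachMap_of_eq_zero hy).symm⟩
    · exact Or.inr ⟨_, (attachMap_of_restrictAttach_eq hxv hy).symm⟩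
  · exact range_subset_iff.2 fun z => ⟨_, attachMap_extendAttach_zero hx z⟩
  · exact range_subset_iff.2 fun t => ⟨_, attachMap_extendAttach_self hx hxv t⟩

end Attach

section InjectivePath

open unitInterval

variable {X : Type u} [TopologicalSpace X] {a b c : X}

lemma injective_subpath {γ : Path a b} (hγ : Function.Injective γ) {s t : I} (hst : s ≠ t) :
    Function.Injective (γ.subpath s t) := by
  intro u v huv
  have hcomb : (1 - (u : ℝ)) * s + u * t = (1 - (v : ℝ)) * s + v * t :=
    congrArg Subtype.val (hγ huv)
  have hprod : ((u : ℝ) - v) * (t - s) = 0 := by linarith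
  rcases mul_eq_zero.1 hprod with h | h
  · exact Subtype.ext (sub_eq_zero.1 h)
  · exact absurd (Subtype.ext (sub_eq_zero.1 h).symm) hst

lemma exists_eq_of_trans_apply_eq {α : Path a b} {β : Path b c} (hα : Function.Injective α)
    (hβ : Function.Injective β) {s t : I} (hst : s < t) (h : α.trans β s = α.trans β t) :
    ∃ u v : I, (u : ℝ) = 2 * s ∧ (v : ℝ) = 2 * t - 1 ∧ α u = β v := by
  have hst' : (s : ℝ) < t := hst
  rw [Path.trans_apply, Path.trans_apply] at h
  split_ifs at h with hs ht ht
  · have := congrArg Subtype.val (hα h)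
    dsimp only at this
    linarith
  · exact ⟨_, _, rfl, rfl, h⟩
  · linarith
  · have := congrArg Subtype.val (hβ h)
    dsimp only at this
    linarith

lemma injective_trans {α : Path a b} {β : Path b c} (hα : Function.Injective α)
    (hβ : Function.Injective β) (h : ∀ s t, α s = β t → t = 0) :
    Function.Injective (α.trans β) := by
  have hlt {s t : I} (hst : s < t) : α.trans β s ≠ α.trans β t := by
    intro heq
    obtain ⟨u, v, hu, hv, huv⟩ := exists_eq_of_trans_apply_eq hα hβ hst heq
    obtain rfl := h u v huv
    obtain rfl : u = 1 := hα (by rw [huv, β.source, α.target])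
    have hst' : (s : ℝ) < t := hst
    rw [Icc.coe_one] at hu
    rw [Icc.coe_zero] at hv
    linarith
  intro s t hst
  rcases lt_trichotomy s t with h | h | h
  · exact absurd hst (hlt h)
  · exact h
  · exact absurd hst.symm (hlt h)

lemma injOn_trans {α : Path a b} {β : Path b a} (hα : Function.Injective α)
    (hβ : Function.Injective β) (h : ∀ s t, α s = β t → s = 0 ∨ s = 1) :
    InjOn (α.trans β) {1}ᶜ := by
  have hlt {s t : I} (ht : t ≠ 1) (hst : s < t) : α.trans β s ≠ α.trans β t := by
    intro heq
    obtain ⟨u, v, hu, hv, huv⟩ := exists_eq_of_trans_apply_eq hα hβ hst heq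
    rcases h u v huv with rfl | rfl
    · obtain rfl : v = 1 := hβ (by rw [← huv, α.source, β.target])
      rw [Icc.coe_one] at hv
      exact ht (Subtype.ext (by rw [Icc.coe_one]; linarith))
    · obtain rfl : v = 0 := hβ (by rw [← huv, α.target, β.source])
      have hst' : (s : ℝ) < t := hst
      rw [Icc.coe_one] at hu
      rw [Icc.coe_zero] at hv
      linarith
  intro s hs t ht hst
  rcases lt_trichotomy s t with h | h | h
  · exact absurd hst (hlt ht h)
  · exact h
  · exact absurd hst.symm (hlt hs h)

lemma isSimpleClosedCurve_range [T2Space X] {γ : Path a a} (hγ : InjOn γ {1}ᶜ) :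
    IsSimpleClosedCurve (range γ) := by
  have : Fact ((0 : ℝ) < 1) := ⟨one_pos⟩
  let f : AddCircle (1 : ℝ) → X := AddCircle.liftIco 1 0 γ.extend
  have hcoe {t : ℝ} (ht : t ∈ Ico (0 : ℝ) 1) : f t = γ ⟨t, Ico_subset_Icc_self ht⟩ :=
    (AddCircle.liftIco_zero_coe_apply ht).trans (γ.extend_apply _)
  have hf : Continuous f := AddCircle.liftIco_zero_continuous
    (by rw [γ.extend_zero, γ.extend_one]) γ.continuous_extend.continuousOn
  have hinj : Function.Injective f := by
    intro x y hxy
    obtain ⟨s, hs, rfl⟩ := AddCircle.eq_coe_Ico x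
    obtain ⟨t, ht, rfl⟩ := AddCircle.eq_coe_Ico y
    rw [hcoe hs, hcoe ht] at hxy
    have hne {r : ℝ} (hr : r ∈ Ico (0 : ℝ) 1) : (⟨r, Ico_subset_Icc_self hr⟩ : I) ≠ 1 :=
      fun h => hr.2.ne (congrArg Subtype.val h)
    exact congrArg (fun r : I => ((r : ℝ) : AddCircle (1 : ℝ))) (hγ (hne hs) (hne ht) hxy)
  have hrange : range f = range γ := by
    refine subset_antisymm (range_subset_iff.2 fun x => ?_) (range_subset_iff.2 fun t => ?_)
    · obtain ⟨s, hs, rfl⟩ := AddCircle.eq_coe_Ico x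
      exact ⟨_, (hcoe hs).symm⟩
    · rcases t.2.2.eq_or_lt with h | h
      · obtain rfl : t = 1 := Subtype.ext h
        exact ⟨(0 : ℝ), by rw [hcoe (by simp), γ.target]; exact γ.source⟩
      · exact ⟨(t : ℝ), hcoe ⟨t.2.1, h⟩⟩
  rw [← hrange]
  exact ⟨(hf.isClosedEmbedding hinj).isEmbedding.toHomeomorph.symm.trans
    (AddCircle.homeomorphCircle one_ne_zero)⟩

/-- The parametrization of an arc as a path. -/
def arcPath {A : Set X} (h : Icc (0 : ℝ) 1 ≃ₜ A) : Path (h 0 : X) (h 1 : X) where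
  toFun t := h t
  source' := rfl
  target' := rfl

lemma injective_arcPath {A : Set X} (h : Icc (0 : ℝ) 1 ≃ₜ A) : Function.Injective (arcPath h) :=
  Subtype.val_injective.comp h.injective

lemma range_arcPath {A : Set X} (h : Icc (0 : ℝ) 1 ≃ₜ A) : range (arcPath h) = A := by
  change range (Subtype.val ∘ h) = A
  rw [h.surjective.range_comp, Subtype.range_val]

lemma homeomorph_unitInterval_apply_zero (φ : I ≃ₜ I) : φ 0 = 0 ∨ φ 0 = 1 :=
  (φ.continuous.strictMono_of_inj_boundedOrder' φ.injective).imp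
    (fun h => (h.orderIsoOfSurjective φ φ.surjective).map_bot)
    fun h => (StrictMono.orderIsoOfSurjective (β := Iᵒᵈ) φ h φ.surjective).map_bot

lemma IsArcEndpoint.eq_or_eq {A : Set X} {x : X} (hx : IsArcEndpoint A x)
    (h : Icc (0 : ℝ) 1 ≃ₜ A) : x = h 0 ∨ x = h 1 := by
  obtain ⟨_, g, hg, -⟩ := hx
  have hx : h ((g.trans h.symm) 0) = g 0 := h.apply_symm_apply _
  rw [← hg]
  exact (homeomorph_unitInterval_apply_zero (g.trans h.symm)).imp
    (fun h0 => congrArg Subtype.val (hx.symm.trans (congrArg h h0)))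
    fun h0 => congrArg Subtype.val (hx.symm.trans (congrArg h h0))

/-- The points `v` and `w` are the end points of an arc in `S`, given by a parametrization. -/
def JoinedByArc (S : Set X) (v w : X) : Prop :=
  ∃ γ : Path v w, Function.Injective γ ∧ range γ ⊆ S

lemma JoinedByArc.symm {S : Set X} {v w : X} : JoinedByArc S v w → JoinedByArc S w v :=
  fun ⟨γ, hγ, hS⟩ => ⟨γ.symm, hγ.comp symm_bijective.injective, γ.symm_range.trans_subset hS⟩

instance (S : Set X) : Std.Symm (JoinedByArc S) := ⟨fun _ _ => JoinedByArc.symm⟩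

lemma JoinedByArc.mono {S T : Set X} (hST : S ⊆ T) {v w : X} : JoinedByArc S v w →
    JoinedByArc T v w := fun ⟨γ, hγ, hS⟩ => ⟨γ, hγ, hS.trans hST⟩

lemma pairwise_joinedByArc_insert {S V : Set X} (hV : V.Pairwise (JoinedByArc S)) {v w : X}
    (hv : v ∈ V) {γ : Path v w} (hγ : Function.Injective γ) (hdisj : ∀ t ≠ 0, γ t ∉ S) :
    (insert w V).Pairwise (JoinedByArc (S ∪ range γ)) := by
  refine Pairwise.insert_of_symm (hV.mono' fun _ _ => JoinedByArc.mono subset_union_left)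
    fun u hu _ => JoinedByArc.symm ?_
  by_cases huv : u = v
  · subst huv
    exact ⟨γ, hγ, subset_union_right⟩
  obtain ⟨α, hα, hαS⟩ := hV hu hv huv
  refine ⟨α.trans γ, injective_trans hα hγ fun s t hst => ?_, ?_⟩
  · by_contra ht
    exact hdisj t ht (hst ▸ hαS (mem_range_self s))
  · rw [Path.trans_range]
    exact union_subset_union_left _ hαS

end InjectivePath

section TreeModel

open unitInterval

variable {X : Type u} [TopologicalSpace X] {S V : Set X} {p : X}

/-- The set `S` is an embedded copy of the realization of a finite forest, with root `p`, in which
the points of `V` are vertices and are joined by arcs. This is the invariant under which a tree is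
assembled from its arcs. -/
structure IsTreeModel (S : Set X) (p : X) (V : Set X) : Prop where
  exists_embedding : ∃ (F : Type) (_ : Finite F) (_ : PartialOrder F), IsForest F ∧
    ∃ ψ : realization F → X, Continuous ψ ∧ Function.Injective ψ ∧ range ψ = S ∧ ψ 0 = p ∧
      V ⊆ ψ '' {x | IsVertex x}
  pairwise_joinedByArc : V.Pairwise (JoinedByArc S)

namespace IsTreeModel

protected lemma singleton (p : X) : IsTreeModel {p} p {p} where
  exists_embedding := ⟨Empty, inferInstance, inferInstance, fun e => e.elim, fun _ => p,
    continuous_const, fun _ _ _ => Subsingleton.elim _ _,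
    range_const, rfl, singleton_subset_iff.2 ⟨0, fun e => e.elim, rfl⟩⟩
  pairwise_joinedByArc := pairwise_singleton _ _

lemma subset (h : IsTreeModel S p V) : V ⊆ S := by
  obtain ⟨_, _, _, -, _, -, -, rfl, -, hV⟩ := h.exists_embedding
  exact hV.trans (image_subset_range _ _)

lemma attach (h : IsTreeModel S p V) {v w : X} (hv : v ∈ V) {γ : Path v w}
    (hγ : Function.Injective γ) (hdisj : ∀ t ≠ 0, γ t ∉ S) :
    IsTreeModel (S ∪ range γ) p (insert w V) where
  exists_embedding := by
    obtain ⟨F, _, _, hF, ψ, hψ, hinj, rfl, rfl, hV⟩ := h.exists_embedding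
    obtain ⟨x, hx, hxv⟩ := hV hv
    refine ⟨Attach x, inferInstance, inferInstance, isForest_attach hF x, attachMap ψ γ,
      continuous_attachMap hx hψ hxv, injective_attachMap hx hinj hγ hxv hdisj,
      range_attachMap hx hxv, attachMap_of_eq_zero rfl, insert_subset ?_ fun u hu => ?_⟩
    · exact ⟨_, isVertex_extendAttach hx hx (Or.inr rfl) (Or.inr rfl),
        (attachMap_extendAttach_self hx hxv 1).trans γ.target⟩
    · obtain ⟨z, hz, rfl⟩ := hV hu
      exact ⟨_, isVertex_extendAttach hx hz (Or.inl rfl) (Or.inl rfl),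
        attachMap_extendAttach_zero hx z⟩
  pairwise_joinedByArc := pairwise_joinedByArc_insert h.pairwise_joinedByArc hv hγ hdisj

lemma attach_subpath (h : IsTreeModel S p V) {a b : X} {γ : Path a b}
    (hγ : Function.Injective γ) {s t : I} (hs : γ s ∈ V)
    (hdisj : ∀ u ∈ uIcc s t, γ u ∈ S → u = s) :
    IsTreeModel (S ∪ γ '' uIcc s t) p (insert (γ t) V) := by
  rcases eq_or_ne s t with rfl | hst
  · rwa [uIcc_self, image_singleton, insert_eq_of_mem hs,
      union_eq_left.2 (singleton_subset_iff.2 (h.subset hs))]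
  have hinj := injective_subpath hγ hst
  rw [← γ.range_subpath]
  refine h.attach hs hinj fun r hr hrS => hr (hinj ?_)
  obtain ⟨u, hu, hur⟩ := (γ.range_subpath s t).subset (mem_range_self r)
  rw [Path.source, ← hur, hdisj u hu (hur ▸ hrS)]

end IsTreeModel

lemma isTreeModel_range {a b : X} {γ : Path a b} (hγ : Function.Injective γ) (s : I) :
    IsTreeModel (range γ) (γ s) {a, b, γ s} := by
  have hIcc0 : uIcc s 0 = Icc 0 s := uIcc_of_ge nonneg'
  have hIcc1 : uIcc s 1 = Icc s 1 := uIcc_of_le le_one'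
  have hupper := (IsTreeModel.singleton (γ s)).attach_subpath hγ (t := 1) rfl fun u _ hu => hγ hu
  have hboth := hupper.attach_subpath hγ (t := 0) (mem_insert_of_mem _ rfl) <| by
    rw [hIcc0, hIcc1]
    rintro u hu (hus | ⟨r, hr, hru⟩)
    · exact hγ hus
    · exact le_antisymm hu.2 (hγ hru ▸ hr.1)
  have hrange : {γ s} ∪ γ '' Icc s 1 ∪ γ '' Icc 0 s = range γ := by
    refine subset_antisymm (by grind) (range_subset_iff.2 fun t => ?_)
    exact (le_total s t).elim (fun h => Or.inl (Or.inr ⟨t, ⟨h, le_one'⟩, rfl⟩))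
      fun h => Or.inr ⟨t, ⟨nonneg', h⟩, rfl⟩
  rwa [γ.source, γ.target, hIcc0, hIcc1, hrange] at hboth

end TreeModel

section Tree

variable {X : Type u} [TopologicalSpace X] {p : X}

lemma exists_mem_diff_inter_sUnion_nonempty [PreconnectedSpace X] {𝒜 𝓑 : Set (Set X)}
    (hfin : 𝒜.Finite) (hclosed : ∀ A ∈ 𝒜, IsClosed A) (hne : ∀ A ∈ 𝒜, A.Nonempty)
    (hcover : ⋃₀ 𝒜 = univ) (hsub : 𝓑 ⊂ 𝒜) (h𝓑 : 𝓑.Nonempty) :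
    ∃ A ∈ 𝒜 \ 𝓑, (A ∩ ⋃₀ 𝓑).Nonempty := by
  have hunion {𝒞 : Set (Set X)} (h𝒞 : 𝒞 ⊆ 𝒜) : IsClosed (⋃₀ 𝒞) :=
    sUnion_eq_biUnion (s := 𝒞) ▸
      (hfin.subset h𝒞).isClosed_biUnion fun A hA => hclosed A (h𝒞 hA)
  have hnonempty {𝒞 : Set (Set X)} (h𝒞 : 𝒞 ⊆ 𝒜) : 𝒞.Nonempty → (univ ∩ ⋃₀ 𝒞).Nonempty :=
    fun ⟨A, hA⟩ => (hne A (h𝒞 hA)).mono fun x hx => ⟨mem_univ x, A, hA, hx⟩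
  obtain ⟨x, -, hx, A, hA, hxA⟩ := isPreconnected_closed_iff.1 isPreconnected_univ _ _
    (hunion hsub.subset) (hunion sdiff_subset)
    (by rw [← sUnion_union, union_sdiff_cancel hsub.subset, hcover])
    (hnonempty hsub.subset h𝓑) (hnonempty sdiff_subset (nonempty_of_ssubset hsub))
  exact ⟨A, hA, x, hxA, hx⟩

lemma closedCover_induction [PreconnectedSpace X] {𝒜 : Set (Set X)} (hfin : 𝒜.Finite)
    (hclosed : ∀ A ∈ 𝒜, IsClosed A) (hne : ∀ A ∈ 𝒜, A.Nonempty) (hcover : ⋃₀ 𝒜 = univ)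
    {P : Set (Set X) → Prop} {A₀ : Set X} (hA₀ : A₀ ∈ 𝒜) (singleton : P {A₀})
    (insert : ∀ 𝓑 ⊆ 𝒜, P 𝓑 → ∀ A ∈ 𝒜 \ 𝓑, (A ∩ ⋃₀ 𝓑).Nonempty → P (insert A 𝓑)) : P 𝒜 := by
  have hgood : {𝓑 | 𝓑 ⊆ 𝒜 ∧ 𝓑.Nonempty ∧ P 𝓑}.Finite :=
    hfin.finite_subsets.subset fun 𝓑 h => h.1
  obtain ⟨𝓑, hmax⟩ := hgood.exists_maximal
    ⟨{A₀}, singleton_subset_iff.2 hA₀, singleton_nonempty A₀, singleton⟩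
  obtain ⟨hsub, h𝓑, hP⟩ := hmax.prop
  rcases hsub.eq_or_ssubset with rfl | hssub
  · exact hP
  obtain ⟨A, hA, hmeet⟩ :=
    exists_mem_diff_inter_sUnion_nonempty hfin hclosed hne hcover hssub h𝓑
  have hle := hmax.le_of_ge ⟨insert_subset hA.1 hsub, insert_nonempty _ _,
    insert 𝓑 hsub hP A hA hmeet⟩ (subset_insert _ _)
  exact absurd (hle (mem_insert _ _)) hA.2

/-- The union of the arcs in `𝓑` is modeled by a finite forest with root `p`, in such a way that
the end points of these arcs are vertices. -/
def IsModeledFamily (p : X) (𝓑 : Set (Set X)) : Prop :=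
  ∃ V, IsTreeModel (⋃₀ 𝓑) p V ∧ ∀ B ∈ 𝓑, ∀ x, IsArcEndpoint B x → x ∈ V

lemma IsArcSet.isModeledFamily_singleton {A : Set X} (hA : IsArcSet A) (hp : p ∈ A) :
    IsModeledFamily p {A} := by
  obtain ⟨h⟩ := hA
  obtain ⟨s, rfl⟩ := (range_arcPath h.symm).symm.subset hp
  have hmodel := isTreeModel_range (injective_arcPath h.symm) s
  rw [range_arcPath] at hmodel
  refine ⟨_, by rwa [sUnion_singleton], ?_⟩
  rintro _ rfl x hx
  exact (hx.eq_or_eq h.symm).imp id Or.inl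

lemma IsModeledFamily.insert [T2Space X] (hcurve : ∀ S : Set X, ¬ IsSimpleClosedCurve S)
    {𝓑 : Set (Set X)} (h𝓑 : IsModeledFamily p 𝓑) {A : Set X}
    (hmeet : ∀ B ∈ 𝓑, ∀ x ∈ A ∩ B, IsArcEndpoint A x ∧ IsArcEndpoint B x)
    (hne : (A ∩ ⋃₀ 𝓑).Nonempty) : IsModeledFamily p (insert A 𝓑) := by
  obtain ⟨V, hV, hend⟩ := h𝓑
  have hcommon {x : X} (hxA : x ∈ A) : x ∈ ⋃₀ 𝓑 → IsArcEndpoint A x ∧ x ∈ V :=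
    fun ⟨B, hB, hxB⟩ => (hmeet B hB x ⟨hxA, hxB⟩).imp_right (hend B hB x)
  obtain ⟨_, hxA, hx𝓑⟩ := hne
  obtain ⟨⟨_, h, rfl, rfl⟩, hzero⟩ := hcommon hxA hx𝓑
  have hγ := injective_arcPath h
  have hinter {t : Icc (0 : ℝ) 1} (ht : arcPath h t ∈ ⋃₀ 𝓑) : t = 0 ∨ t = 1 :=
    ((hcommon (h t).2 ht).1.eq_or_eq h).imp (@hγ t 0) (@hγ t 1)
  -- An arc of the model from `h 1` back to `h 0` would close up `A` to a simple closed curve.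
  have hone : (h 1 : X) ∉ ⋃₀ 𝓑 := by
    intro hone
    obtain ⟨β, hβ, hβS⟩ := hV.pairwise_joinedByArc (hcommon (h 1).2 hone).2 hzero
      (hγ.ne one_ne_zero)
    exact hcurve _ <| isSimpleClosedCurve_range <| injOn_trans hγ hβ fun s t hst =>
      hinter (hst ▸ hβS (mem_range_self t))
  have hmodel := hV.attach hzero hγ fun t ht ht𝓑 => hone ((hinter ht𝓑).resolve_left ht ▸ ht𝓑)
  rw [range_arcPath, union_comm, ← sUnion_insert] at hmodel
  refine ⟨_, hmodel, forall_mem_insert.2 ⟨fun x hx => ?_, fun B hB x hx => ?_⟩⟩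
  · exact (hx.eq_or_eq h).elim (fun h0 => Or.inr (h0 ▸ hzero)) Or.inl
  · exact Or.inr (hend B hB x hx)

end Tree

namespace IsTree

variable {X : Type u} [MetricSpace X]

lemma exists_isTreeModel (hX : IsTree X) (p : X) : ∃ V, IsTreeModel univ p V := by
  obtain ⟨⟨_, _, -, 𝒜, harc, hcover, hmeet⟩, hcurve⟩ := hX
  have hclosed (A : Set X) (hA : A ∈ 𝒜) : IsClosed A := by
    obtain ⟨h⟩ := harc A hA
    have : CompactSpace A := h.symm.compactSpace
    exact (isCompact_iff_compactSpace.2 this).isClosed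
  have hne (A : Set X) (hA : A ∈ 𝒜) : A.Nonempty := by
    obtain ⟨h⟩ := harc A hA
    exact ⟨_, (h.symm 0).2⟩
  obtain ⟨A₀, hA₀, hpA₀⟩ := mem_sUnion.1 (hcover ▸ mem_univ p)
  have hmodel : IsModeledFamily p (𝒜 : Set (Set X)) :=
    closedCover_induction 𝒜.finite_toSet hclosed hne hcover hA₀
      ((harc A₀ hA₀).isModeledFamily_singleton hpA₀) fun 𝓑 hsub h𝓑 A hA =>
        h𝓑.insert hcurve fun B hB => hmeet A hA.1 B (hsub hB) fun hAB => hA.2 (hAB ▸ hB)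
  exact hmodel.imp fun V hV => hcover ▸ hV.1

lemma exists_realization (hX : IsTree X) (p : X) :
    ∃ (F : Type) (_ : Finite F) (_ : PartialOrder F), IsForest F ∧ IsBranching F ∧
      ∃ ψ : realization F ≃ₜ X, ψ 0 = p := by
  obtain ⟨V, hV⟩ := hX.exists_isTreeModel p
  obtain ⟨F, _, _, hF, ψ, hψ, hinj, hrange, rfl, -⟩ := hV.exists_embedding
  obtain ⟨G, hG, hGo, hGF, hGB, h, h0⟩ := exists_isBranching hF
  let e : realization F ≃ₜ X := Continuous.homeoOfEquivCompactToT2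
    (f := Equiv.ofBijective ψ ⟨hinj, range_eq_univ.1 hrange⟩) hψ
  exact ⟨G, hG, hGo, hGF, hGB, h.symm.trans e, congrArg ψ (h.symm_apply_eq.2 h0.symm)⟩

end IsTree

theorem statement18_general {X : Type u} [MetricSpace X] (hX : IsTree X) (p : X) :
    UniqueHyperspaceInTrees X p := by
  rintro Y _ hY q ⟨h⟩
  obtain ⟨F, _, _, hF, hBF, ψ, rfl⟩ := hX.exists_realization p
  obtain ⟨G, _, _, hG, hBG, ψ', rfl⟩ := hY.exists_realization q
  obtain ⟨k⟩ := nonempty_homeomorph_CP hF ψ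
  obtain ⟨k'⟩ := nonempty_homeomorph_CP hG ψ'
  obtain ⟨φ⟩ := exists_orderIso_of_homeomorph hF hBF hG hBG ((k.trans h).trans k'.symm)
  exact ⟨(ψ.symm.trans (realizationCongr φ)).trans ψ', by simp [realizationCongr_zero]⟩

theorem statement18 {X : Type u} [MetricSpace X] (hX : IsTree X)
    (p : X) (hp : p ∈ ordinaryIn (univ : Set X) ∪ endPtsIn (univ : Set X)) :
    UniqueHyperspaceInTrees X p :=
  statement18_general hX p
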